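/- arXiv:1804.00221 — 4 statements merged into one kernel-verified Lean document; each statement's English description precedes it below -/
import Mathlib

section
/- Let b ≥ 5 be a squarefree integer and a a positive rational that is not an integral power of b; write a = (r/s)·b^k with k ∈ Z, r, s coprime positive integers, 1 < r/s < b. Then the block complexity of the leading digit sequence of a^n in base b satisfies p_{a,b}(n) = c·n + d for all n ≥ 1, where c = b − 1 − ⌊(b−1)/r⌋ − ⌊(gcd(b,r)−1)/s⌋ and d = b − 1 − c. -/
/-- The leading digit of `x` in base `b`: the unique `d ∈ {1,…,b-1}` with
`d · b^k ≤ x < (d+1) · b^k` for some integer `k` (here `k = ⌊log_b x⌋`). -/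
noncomputable def leadingDigit (b : ℕ) (x : ℝ) : ℕ :=
  (⌊x / (b : ℝ) ^ (⌊Real.logb b x⌋ : ℤ)⌋).toNat

/-- The block complexity of the leading digit sequence of `a^n` in base `b`:
the number of distinct blocks of length `n`. -/
noncomputable def blockComplexity (a : ℝ) (b : ℕ) (n : ℕ) : ℕ :=
  Set.ncard {w : Fin n → ℕ |
    ∃ m : ℕ, 1 ≤ m ∧ ∀ i : Fin n, w i = leadingDigit b (a ^ (m + (i : ℕ)))}


/-- The digits `d` whose boundary point `d (s/r)^i` is already produced at an earlier time. -/
def BadDigit (b r s d : ℕ) : Prop := r ∣ d ∨ (r / Nat.gcd b r ∣ d ∧ d * s < r)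

theorem nt_neg {b r s d d' t m : ℕ} (hsf : Squarefree b) (hb : 5 ≤ b)
    (hr : 0 < r) (hs : 0 < s) (hco : Nat.Coprime r s) (h2 : r < b * s)
    (hd : 1 ≤ d) (hd' : d' < b) (ht : 1 ≤ t)
    (h : d * s ^ t * b ^ m = d' * r ^ t) : BadDigit b r s d := by
  have hmt : m ≤ t := by
    have e1 : r ^ t ≤ (b * s) ^ t := Nat.pow_le_pow_left h2.le t
    have e2 : s ^ t * b ^ m < s ^ t * b ^ (t + 1) := by
      calc s ^ t * b ^ m ≤ d * (s ^ t * b ^ m) := Nat.le_mul_of_pos_left _ hd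
        _ = d' * r ^ t := by rw [← h]; ring
        _ ≤ d' * (b * s) ^ t := Nat.mul_le_mul_left _ e1
        _ < b * (b * s) ^ t := Nat.mul_lt_mul_of_pos_right hd' (by positivity)
        _ = s ^ t * b ^ (t + 1) := by ring
    have e3 := lt_of_mul_lt_mul_left e2 (Nat.zero_le _)
    have := (Nat.pow_lt_pow_iff_right (by omega : 1 < b)).1 e3
    omega
  have hdv : r ^ t ∣ d * b ^ m := by
    have : r ^ t ∣ (d * b ^ m) * s ^ t := ⟨d', by rw [mul_comm (r ^ t), ← h]; ring⟩
    exact (Nat.Coprime.pow t t hco).dvd_of_dvd_mul_right this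
  set g := Nat.gcd b r with hg
  have hgp : 0 < g := Nat.gcd_pos_of_pos_right _ hr
  obtain ⟨b', hb'⟩ : g ∣ b := Nat.gcd_dvd_left _ _
  obtain ⟨r', hr'⟩ : g ∣ r := Nat.gcd_dvd_right _ _
  have hrg : r / g = r' := by rw [hr']; exact Nat.mul_div_cancel_left _ hgp
  have hbg : b / g = b' := by rw [hb']; exact Nat.mul_div_cancel_left _ hgp
  have c1 : Nat.Coprime r' b' := by
    have := Nat.coprime_div_gcd_div_gcd hgp
    rw [← hg, hrg, hbg] at this
    exact this.symm
  have c2 : Nat.Coprime g b' := by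
    apply Nat.coprime_of_squarefree_mul; rw [← hb']; exact hsf
  rcases Nat.lt_or_ge m t with hlt | hge
  · left
    have hdv2 : r ^ t ∣ d * b ^ (t - 1) := hdv.trans
      (Nat.mul_dvd_mul_left _ (pow_dvd_pow _ (by omega)))
    obtain ⟨u, rfl⟩ : ∃ u, t = u + 1 := ⟨t - 1, by omega⟩
    simp only [Nat.add_sub_cancel] at hdv2
    have : g ^ u * (r' ^ (u + 1) * g) ∣ g ^ u * (d * b' ^ u) := by
      have e : g ^ u * (r' ^ (u + 1) * g) = r ^ (u + 1) := by rw [hr']; ring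
      have e' : g ^ u * (d * b' ^ u) = d * b ^ u := by rw [hb']; ring
      rw [e, e']; exact hdv2
    have h3 := Nat.dvd_of_mul_dvd_mul_left (by positivity) this
    have h4 : r' ^ (u + 1) * g ∣ d :=
      Nat.Coprime.dvd_of_dvd_mul_right
        (Nat.Coprime.mul_left (Nat.Coprime.pow _ _ c1) (Nat.Coprime.pow_right _ c2)) h3
    refine Dvd.dvd.trans ?_ h4
    exact ⟨r' ^ u, by rw [hr']; ring⟩
  · right
    have : m = t := by omega
    subst this
    constructor
    · rw [hrg]
      have : g ^ m * r' ^ m ∣ g ^ m * (d * b' ^ m) := by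
        have e : g ^ m * r' ^ m = r ^ m := by rw [hr']; ring
        have e' : g ^ m * (d * b' ^ m) = d * b ^ m := by rw [hb']; ring
        rw [e, e']; exact hdv
      have h3 := Nat.dvd_of_mul_dvd_mul_left (by positivity) this
      have h4 : r' ^ m ∣ d := Nat.Coprime.dvd_of_dvd_mul_right (Nat.Coprime.pow _ _ c1) h3
      exact (dvd_pow_self _ (by omega)).trans h4
    · by_contra hcon
      push Not at hcon
      obtain ⟨u, rfl⟩ : ∃ u, m = u + 1 := ⟨m - 1, by omega⟩
      have e1 : r ^ u ≤ (b * s) ^ u := Nat.pow_le_pow_left h2.le u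
      have : b * r ^ (u + 1) ≤ d' * r ^ (u + 1) := by
        calc b * r ^ (u + 1) = b * (r * r ^ u) := by ring
          _ ≤ b * (d * s * (b * s) ^ u) := Nat.mul_le_mul_left _ (Nat.mul_le_mul hcon e1)
          _ = d' * r ^ (u + 1) := by rw [← h]; ring
      have := Nat.le_of_mul_le_mul_right this (by positivity)
      omega

theorem nt_pos {b r s d d' t m : ℕ} (hco : Nat.Coprime r s) (ht : 1 ≤ t)
    (h : d * s ^ t = d' * r ^ t * b ^ m) : BadDigit b r s d := by
  left
  have : r ^ t ∣ d * s ^ t := ⟨d' * b ^ m, by rw [h]; ring⟩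
  exact (dvd_pow_self _ (by omega)).trans ((Nat.Coprime.pow t t hco).dvd_of_dvd_mul_right this)

theorem nt_no_pow {b r s t m : ℕ} (hsf : Squarefree b) (hb : 5 ≤ b)
    (hr : 0 < r) (hs : 0 < s) (hco : Nat.Coprime r s) (h1 : s < r) (h2 : r < b * s)
    (ht : 1 ≤ t) (h : s ^ t * b ^ m = r ^ t) : False := by
  have hs1 : s = 1 := by
    have : s ^ t ∣ r ^ t := ⟨b ^ m, h.symm⟩
    rw [Nat.pow_dvd_pow_iff (by omega)] at this
    exact Nat.eq_one_of_dvd_coprimes hco this dvd_rfl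
  subst hs1
  have hbad := nt_neg (d := 1) (d' := 1) hsf hb hr hs hco h2 le_rfl (by omega) ht
    (by rw [one_mul, one_mul]; exact h)
  rw [one_pow, one_mul] at h
  have hm : m ≠ 0 := by
    rintro rfl
    have : 1 < r ^ t := Nat.one_lt_pow (by omega) h1
    simp at h; omega
  have hrb : r ∣ b := by
    rcases hbad with h' | ⟨h', -⟩
    · have := Nat.dvd_one.1 h'; omega
    · have := Nat.dvd_one.1 h'
      have e := Nat.div_mul_cancel (Nat.gcd_dvd_right b r)
      rw [this, one_mul] at e
      rw [← e]; exact Nat.gcd_dvd_left _ _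
  obtain ⟨b', rfl⟩ := hrb
  have hc : Nat.Coprime r b' := Nat.coprime_of_squarefree_mul hsf
  have : b' ∣ r ^ t := by rw [← h]; exact (dvd_mul_left _ _).trans (dvd_pow_self _ hm)
  have := Nat.eq_one_of_dvd_coprimes (Nat.Coprime.pow_left t hc) this dvd_rfl
  subst this
  simp at h2

theorem bad_reduce {b r s d : ℕ} (hr : 0 < r) (hs : 0 < s) (h1 : s < r)
    (hd : 1 ≤ d) (hdb : d < b) (h : BadDigit b r s d) :
    ∃ d' m : ℕ, 1 ≤ d' ∧ d' < b ∧ d * s * b ^ m = d' * r := by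
  rcases h with ⟨e, rfl⟩ | ⟨⟨e, he⟩, hlt⟩
  · refine ⟨s * e, 0, ?_, ?_, by ring⟩
    · have : 0 < e := Nat.pos_of_mul_pos_left hd
      exact Nat.mul_pos hs this
    · exact (Nat.mul_le_mul_right e h1.le).trans_lt hdb
  · have hgp : 0 < Nat.gcd b r := Nat.gcd_pos_of_pos_right _ hr
    obtain ⟨b', hb'⟩ : Nat.gcd b r ∣ b := Nat.gcd_dvd_left _ _
    have er := Nat.div_mul_cancel (Nat.gcd_dvd_right b r)
    set g := Nat.gcd b r
    set r' := r / g
    have key : d * s * b ^ 1 = (s * e * b') * r := by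
      rw [← er, he, hb']; ring
    refine ⟨s * e * b', 1, ?_, ?_, key⟩
    · by_contra hcon
      have : s * e * b' = 0 := by omega
      rw [this] at key
      have hbp : 0 < b := by omega
      have : 0 < d * s * b ^ 1 := by positivity
      omega
    · have : s * e * b' * r < b * r := by
        rw [← key, pow_one, mul_comm b r]
        exact Nat.mul_lt_mul_of_pos_right hlt (by omega)
      exact lt_of_mul_lt_mul_right this (Nat.zero_le _)

open Classical in
theorem bad_card {b r s : ℕ} (hr : 0 < r) (hs : 0 < s) (h2 : r < b * s) :
    ((Finset.Icc 1 (b - 1)).filter (BadDigit b r s)).card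
      = (b - 1) / r + (Nat.gcd b r - 1) / s := by
  have hgp : 0 < Nat.gcd b r := Nat.gcd_pos_of_pos_right _ hr
  have er := Nat.div_mul_cancel (Nat.gcd_dvd_right b r)
  have e : (Finset.Icc 1 (b - 1)).filter (BadDigit b r s)
    = ((Finset.Ioc 0 (b - 1)).filter (fun d => r ∣ d)) ∪
      ((Finset.Icc 1 ((Nat.gcd b r - 1) / s)).image (fun e => (r / Nat.gcd b r) * e)) := by
    ext d
    simp only [Finset.mem_filter, Finset.mem_union, Finset.mem_image, Finset.mem_Icc,
      Finset.mem_Ioc, BadDigit]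
    set g := Nat.gcd b r
    set r' := r / g
    have hr'p : 0 < r' := Nat.pos_of_ne_zero (by intro h; rw [h] at er; omega)
    constructor
    · rintro ⟨⟨ha, hb⟩, h | ⟨⟨e, rfl⟩, h⟩⟩
      · left; exact ⟨⟨by omega, hb⟩, h⟩
      · right
        refine ⟨e, ⟨Nat.pos_of_mul_pos_left ha, ?_⟩, rfl⟩
        rw [Nat.le_div_iff_mul_le hs]
        have : e * s < g := by
          rw [← er, mul_assoc] at h
          exact lt_of_mul_lt_mul_left h (Nat.zero_le _)
        omega
    · rintro (⟨⟨ha, hb⟩, h⟩ | ⟨e, ⟨he1, he2⟩, rfl⟩)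
      · exact ⟨⟨ha, hb⟩, Or.inl h⟩
      · rw [Nat.le_div_iff_mul_le hs] at he2
        have hlt : r' * e * s < r := by
          rw [← er, mul_assoc]
          exact Nat.mul_lt_mul_of_pos_left (by omega) hr'p
        have : r' * e < b := lt_of_mul_lt_mul_right (hlt.trans h2) (Nat.zero_le _)
        exact ⟨⟨Nat.mul_pos hr'p he1, by omega⟩, Or.inr ⟨dvd_mul_right _ _, hlt⟩⟩
  have hr'p : 0 < r / Nat.gcd b r := Nat.pos_of_ne_zero (by intro h; rw [h] at er; omega)
  rw [e, Finset.card_union_of_disjoint, Nat.Ioc_filter_dvd_card_eq_div,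
    Finset.card_image_of_injective _ (fun x y h => Nat.eq_of_mul_eq_mul_left hr'p h)]
  · simp
  · rw [Finset.disjoint_left]
    simp only [Finset.mem_filter, Finset.mem_image, Finset.mem_Icc, Finset.mem_Ioc, not_exists]
    rintro d ⟨⟨hd, -⟩, hrd⟩ e ⟨⟨he1, he2⟩, rfl⟩
    have := Nat.le_of_dvd hd hrd
    rw [Nat.le_div_iff_mul_le hs] at he2
    have h3 : e < Nat.gcd b r := by
      have : e ≤ e * s := Nat.le_mul_of_pos_right _ hs
      omega
    have := Nat.mul_lt_mul_of_pos_left h3 hr'p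
    omega

theorem orbit_dense {q B x y : ℝ} (hq : 1 < q) (hB : 1 < B)
    (hirr : Irrational (Real.log q / Real.log B)) (hx : 0 < x) (hxy : x < y) :
    ∃ m : ℕ, 1 ≤ m ∧ ∃ l : ℤ, x < q ^ m * B ^ l ∧ q ^ m * B ^ l < y := by
  have hlB := Real.log_pos hB
  have : Fact (0 < Real.log B) := ⟨hlB⟩
  have hd : DenseRange (fun n : ℕ => n • (Real.log q : AddCircle (Real.log B))) :=
    denseRange_zsmul_iff_nsmul.1 (AddCircle.denseRange_zsmul_coe_iff.2 hirr)
  have hlog : Real.log x < Real.log y := Real.log_lt_log hx hxy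
  have hopen : IsOpen ((fun z : ℝ => (z : AddCircle (Real.log B))) ''
      Set.Ioo (Real.log x - Real.log q) (Real.log y - Real.log q)) :=
    QuotientAddGroup.isOpenMap_coe _ isOpen_Ioo
  obtain ⟨n, u, hu, hun⟩ := hd.exists_mem_open hopen
    ((Set.nonempty_Ioo.2 (by linarith)).image _)
  have hun' : (u : AddCircle (Real.log B)) = ((n * Real.log q : ℝ) : AddCircle (Real.log B)) := by
    rw [← nsmul_eq_mul]; exact hun
  rw [QuotientAddGroup.eq] at hun'
  obtain ⟨l, hl⟩ := AddSubgroup.mem_zmultiples_iff.1 hun'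
  rw [zsmul_eq_mul] at hl
  have hy : 0 < y := hx.trans hxy
  have hq0 : 0 < q := by linarith
  have hB0 : 0 < B := by linarith
  have e : Real.log (q ^ (n + 1) * B ^ (-l)) = u + Real.log q := by
    rw [Real.log_mul (by positivity) (by positivity), Real.log_pow, Real.log_zpow]
    push_cast
    linarith
  have hp : 0 < q ^ (n + 1) * B ^ (-l) := by positivity
  refine ⟨n + 1, by omega, -l, ?_, ?_⟩
  · rw [← Real.log_lt_log_iff hx hp, e]; linarith [hu.1]
  · rw [← Real.log_lt_log_iff hp hy, e]; linarith [hu.2]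

theorem ld_eq {b : ℕ} (hb : 5 ≤ b) {x : ℝ} {d : ℕ} (hd : 1 ≤ d) (hdb : d < b) {l : ℤ}
    (h1 : d * (b : ℝ) ^ l ≤ x) (h2 : x < (d + 1) * (b : ℝ) ^ l) : leadingDigit b x = d := by
  have hb1 : (1 : ℝ) < b := by exact_mod_cast (by omega : 1 < b)
  have hb0 : (0 : ℝ) < b := by linarith
  have hp : 0 < (b : ℝ) ^ l := zpow_pos hb0 l
  have hd1 : (1 : ℝ) ≤ d := by exact_mod_cast hd
  have hdb1 : (d : ℝ) + 1 ≤ b := by exact_mod_cast hdb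
  have hx : 0 < x := by nlinarith
  have hf : ⌊Real.logb b x⌋ = l := by
    rw [Int.floor_eq_iff, Real.le_logb_iff_rpow_le hb1 hx, Real.logb_lt_iff_lt_rpow hb1 hx]
    have e : (b : ℝ) ^ ((l : ℝ) + 1) = b * (b : ℝ) ^ l := by
      rw [Real.rpow_add hb0, Real.rpow_intCast, Real.rpow_one, mul_comm]
    rw [e, Real.rpow_intCast]
    constructor <;> nlinarith
  have hf2 : ⌊x / (b : ℝ) ^ l⌋ = (d : ℤ) := by
    rw [Int.floor_eq_iff, le_div_iff₀ hp, div_lt_iff₀ hp]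
    exact ⟨by exact_mod_cast h1, by exact_mod_cast h2⟩
  rw [leadingDigit, hf, hf2]; simp

theorem ld_spec {b : ℕ} (hb : 5 ≤ b) {x : ℝ} (hx : 0 < x) :
    ∃ (d : ℕ) (l : ℤ), 1 ≤ d ∧ d < b ∧ d * (b : ℝ) ^ l ≤ x ∧ x < (d + 1) * (b : ℝ) ^ l ∧
      leadingDigit b x = d := by
  have hb1 : (1 : ℝ) < b := by exact_mod_cast (by omega : 1 < b)
  have hb0 : (0 : ℝ) < b := by linarith
  obtain ⟨l, h1, h2⟩ := exists_mem_Ico_zpow hx hb1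
  have hp : 0 < (b : ℝ) ^ l := zpow_pos hb0 l
  rw [zpow_add_one₀ hb0.ne'] at h2
  have hy0 : 0 ≤ x / (b : ℝ) ^ l := by positivity
  have k1 := Nat.floor_le hy0
  have k2 := Nat.lt_floor_add_one (x / (b : ℝ) ^ l)
  rw [le_div_iff₀ hp] at k1
  rw [div_lt_iff₀ hp] at k2
  have k3 : 1 ≤ ⌊x / (b : ℝ) ^ l⌋₊ := by
    rw [Nat.one_le_floor_iff, le_div_iff₀ hp]; linarith
  have k4 : ⌊x / (b : ℝ) ^ l⌋₊ < b := by
    rw [Nat.floor_lt hy0, div_lt_iff₀ hp]; linarith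
  exact ⟨_, l, k3, k4, k1, k2, ld_eq hb k3 k4 k1 k2⟩

theorem ld_mul_zpow {b : ℕ} (hb : 5 ≤ b) {x : ℝ} (hx : 0 < x) (l : ℤ) :
    leadingDigit b (x * (b : ℝ) ^ l) = leadingDigit b x := by
  have hb0 : (0 : ℝ) < b := by exact_mod_cast (by omega : 0 < b)
  have hp : 0 < (b : ℝ) ^ l := zpow_pos hb0 l
  obtain ⟨d, l', h1, h2, h3, h4, h5⟩ := ld_spec hb hx
  rw [h5]
  refine ld_eq hb h1 h2 (l := l' + l) ?_ ?_
  · rw [zpow_add₀ hb0.ne', ← mul_assoc]; gcongr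
  · rw [zpow_add₀ hb0.ne', ← mul_assoc]; gcongr

/-- key injectivity: a boundary point `y` slightly above `x` is distinguished from `x`. -/
theorem ld_sep {b : ℕ} (hb : 5 ≤ b) {x y Q : ℝ} (hx : 0 < x) (hQ : 0 < Q) (hxy : x < y)
    (hyx : y < 2 * x) {d : ℕ} (hd : 1 ≤ d) (hdb : d < b) {l : ℤ}
    (hy : y * Q = d * (b : ℝ) ^ l)
    (h : leadingDigit b (x * Q) = leadingDigit b (y * Q)) : False := by
  have hb1 : (1 : ℝ) < b := by exact_mod_cast (by omega : 1 < b)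
  have hb5 : (5 : ℝ) ≤ b := by exact_mod_cast hb
  have hb0 : (0 : ℝ) < b := by linarith
  have hd1 : (1 : ℝ) ≤ d := by exact_mod_cast hd
  have hpl : 0 < (b : ℝ) ^ l := zpow_pos hb0 l
  have e : leadingDigit b (y * Q) = d :=
    ld_eq hb hd hdb (l := l) hy.ge (by rw [hy]; nlinarith)
  obtain ⟨d', l', h1, h2, h3, h4, h5⟩ := ld_spec hb (mul_pos hx hQ)
  have : d' = d := by rw [← h5, h, e]
  subst this
  have hlt : x * Q < y * Q := mul_lt_mul_of_pos_right hxy hQ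
  have hlt2 : y * Q < 2 * (x * Q) := by nlinarith
  have hp' : 0 < (b : ℝ) ^ l' := zpow_pos hb0 l'
  have hll : l' < l := by
    have : (d' : ℝ) * (b : ℝ) ^ l' < d' * (b : ℝ) ^ l := by linarith
    have := lt_of_mul_lt_mul_left this (by linarith)
    exact (zpow_lt_zpow_iff_right₀ hb1).1 this
  have h6 : (b : ℝ) ^ l' * b ≤ (b : ℝ) ^ l := by
    rw [← zpow_add_one₀ hb0.ne']
    exact zpow_le_zpow_right₀ hb1.le (by omega)
  have h7 : (d' : ℝ) * ((b : ℝ) ^ l' * 5) ≤ d' * (b : ℝ) ^ l := by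
    apply mul_le_mul_of_nonneg_left _ (by linarith)
    nlinarith
  nlinarith

/-- The coding word of the point `x`. -/
noncomputable def codeWord (b : ℕ) (q : ℝ) (n : ℕ) (x : ℝ) : Fin n → ℕ :=
  fun i => leadingDigit b (x * q ^ (i : ℕ))

theorem codeWord_mul_zpow {b : ℕ} (hb : 5 ≤ b) {q : ℝ} (hq : 0 < q) (n : ℕ) {x : ℝ} (hx : 0 < x)
    (l : ℤ) : codeWord b q n (x * (b : ℝ) ^ l) = codeWord b q n x := by
  funext i
  simp only [codeWord]
  rw [mul_right_comm]
  exact ld_mul_zpow hb (by positivity) l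

theorem codeWord_inj {b : ℕ} (hb : 5 ≤ b) {q : ℝ} (hq : 1 < q) {n i j d e : ℕ}
    (hi : i < n) (hj : j < n) (hd : 1 ≤ d) (hdb : d < b) (he : 1 ≤ e) (heb : e < b)
    (h : codeWord b q n (d / q ^ i) = codeWord b q n (e / q ^ j)) :
    ∃ l : ℤ, (d : ℝ) / q ^ i = e / q ^ j * (b : ℝ) ^ l := by
  have hb0 : (0 : ℝ) < b := by exact_mod_cast (by omega : 0 < b)
  have hq0 : 0 < q := by linarith
  have hd0 : (0 : ℝ) < d := by exact_mod_cast hd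
  have he0 : (0 : ℝ) < e := by exact_mod_cast he
  have hx : (0 : ℝ) < d / q ^ i := by positivity
  have hy : (0 : ℝ) < e / q ^ j := by positivity
  obtain ⟨d₀, l, a1, a2, a3, a4, a5⟩ := ld_spec hb hx
  obtain ⟨e₀, l', b1, b2, b3, b4, b5⟩ := ld_spec hb hy
  have h0 := congrFun h ⟨0, by omega⟩
  simp only [codeWord, pow_zero, mul_one] at h0
  have hde : e₀ = d₀ := by rw [← b5, ← h0, a5]
  subst hde
  refine ⟨l - l', ?_⟩
  have hz : (0 : ℝ) < e / q ^ j * (b : ℝ) ^ (l - l') := by positivity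
  have h' : codeWord b q n (d / q ^ i) = codeWord b q n (e / q ^ j * (b : ℝ) ^ (l - l')) := by
    rw [codeWord_mul_zpow hb hq0 n hy, h]
  have eL : (b : ℝ) ^ l = (b : ℝ) ^ l' * (b : ℝ) ^ (l - l') := by
    rw [← zpow_add₀ hb0.ne']; congr 1; ring
  have hpm : 0 < (b : ℝ) ^ (l - l') := zpow_pos hb0 _
  have c3 : e₀ * (b : ℝ) ^ l ≤ e / q ^ j * (b : ℝ) ^ (l - l') := by
    rw [eL, ← mul_assoc]; gcongr
  have c4 : e / q ^ j * (b : ℝ) ^ (l - l') < (e₀ + 1) * (b : ℝ) ^ l := by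
    rw [eL, ← mul_assoc]; gcongr
  have hpl : 0 < (b : ℝ) ^ l := zpow_pos hb0 _
  have he₀ : (1 : ℝ) ≤ e₀ := by exact_mod_cast a1
  have hmul : (b : ℝ) ^ l ≤ e₀ * (b : ℝ) ^ l := by nlinarith
  rcases lt_trichotomy ((d : ℝ) / q ^ i) (e / q ^ j * (b : ℝ) ^ (l - l')) with hlt | heq | hgt
  · exfalso
    refine ld_sep hb hx (pow_pos hq0 j) hlt (by linarith) he heb (l := l - l') ?_
      (congrFun h' ⟨j, hj⟩)
    field_simp
  · exact heq
  · exfalso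
    refine ld_sep hb hz (pow_pos hq0 i) hgt (by linarith) hd hdb (l := 0) ?_
      (congrFun h' ⟨i, hi⟩).symm
    rw [zpow_zero]; field_simp

theorem codeWord_surj {b : ℕ} (hb : 5 ≤ b) {q : ℝ} (hq : 1 < q) {n : ℕ} (hn : 1 ≤ n) {x : ℝ}
    (hx : 0 < x) :
    ∃ d i : ℕ, 1 ≤ d ∧ d < b ∧ i < n ∧ codeWord b q n x = codeWord b q n (d / q ^ i) := by
  have hb0 : (0 : ℝ) < b := by exact_mod_cast (by omega : 0 < b)
  have hq0 : 0 < q := by linarith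
  have H : ∀ i : Fin n, ∃ (d : ℕ) (l : ℤ), 1 ≤ d ∧ d < b ∧ d * (b : ℝ) ^ l ≤ x * q ^ (i : ℕ) ∧
      x * q ^ (i : ℕ) < (d + 1) * (b : ℝ) ^ l ∧ leadingDigit b (x * q ^ (i : ℕ)) = d :=
    fun i => ld_spec hb (by positivity)
  choose d l h1 h2 h3 h4 h5 using H
  have : Nonempty (Fin n) := ⟨⟨0, by omega⟩⟩
  obtain ⟨i, hi⟩ := Finite.exists_max (fun i : Fin n => (d i : ℝ) * (b : ℝ) ^ l i / q ^ (i : ℕ))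
  refine ⟨d i, i, h1 i, h2 i, i.2, ?_⟩
  have hdi : (0 : ℝ) < d i := by exact_mod_cast h1 i
  rw [← codeWord_mul_zpow hb hq0 n (x := d i / q ^ (i : ℕ)) (by positivity) (l i)]
  have e : (d i : ℝ) / q ^ (i : ℕ) * (b : ℝ) ^ l i = d i * (b : ℝ) ^ l i / q ^ (i : ℕ) := by ring
  rw [e]
  funext j
  simp only [codeWord]
  rw [h5 j]
  symm
  have hj := hi j
  have hle : (d i : ℝ) * (b : ℝ) ^ l i / q ^ (i : ℕ) ≤ x := by
    rw [div_le_iff₀ (by positivity)]; exact h3 i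
  refine ld_eq hb (h1 j) (h2 j) (l := l j) ?_ ?_
  · rwa [div_le_iff₀ (by positivity)] at hj
  · refine lt_of_le_of_lt ?_ (h4 j)
    gcongr

theorem codeWord_right {b : ℕ} (hb : 5 ≤ b) {q : ℝ} (hq : 1 < q) {n : ℕ} {x : ℝ}
    (hx : 0 < x) :
    ∃ y, x < y ∧ ∀ z, x ≤ z → z < y → codeWord b q n z = codeWord b q n x := by
  have hb0 : (0 : ℝ) < b := by exact_mod_cast (by omega : 0 < b)
  have hq0 : 0 < q := by linarith
  have H : ∀ i : Fin n, ∃ y, x < y ∧ ∀ z, x ≤ z → z < y →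
      codeWord b q n z i = codeWord b q n x i := by
    intro i
    obtain ⟨d, l, h1, h2, h3, h4, h5⟩ := ld_spec hb (x := x * q ^ (i : ℕ)) (by positivity)
    refine ⟨(d + 1) * (b : ℝ) ^ l / q ^ (i : ℕ), ?_, ?_⟩
    · rwa [lt_div_iff₀ (by positivity)]
    · intro z hz1 hz2
      rw [lt_div_iff₀ (by positivity)] at hz2
      simp only [codeWord]
      rw [h5]
      refine ld_eq hb h1 h2 (h3.trans ?_) hz2
      gcongr
  choose y hy1 hy2 using H
  rcases Nat.eq_zero_or_pos n with rfl | hn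
  · exact ⟨x + 1, by linarith, fun z _ _ => Subsingleton.elim _ _⟩
  have : Nonempty (Fin n) := ⟨⟨0, by omega⟩⟩
  obtain ⟨i, hi⟩ := Finite.exists_min y
  exact ⟨y i, hy1 i, fun z hz1 hz2 => funext fun j => hy2 j z hz1 (hz2.trans_le (hi j))⟩

theorem bad_of_eq {b r s : ℕ} (hsf : Squarefree b) (hb : 5 ≤ b)
    (hr : 0 < r) (hs : 0 < s) (hco : Nat.Coprime r s) (h2 : r < b * s) {d e i j : ℕ}
    (hd : 1 ≤ d) (heb : e < b) (hij : j < i) {l : ℤ}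
    (h : (d : ℝ) / ((r : ℝ) / s) ^ i = e / ((r : ℝ) / s) ^ j * (b : ℝ) ^ l) :
    BadDigit b r s d := by
  obtain ⟨t, rfl⟩ : ∃ t, i = j + t := ⟨i - j, by omega⟩
  have hr0 : (0 : ℝ) < r := by exact_mod_cast hr
  have hs0 : (0 : ℝ) < s := by exact_mod_cast hs
  have hb0 : (0 : ℝ) < b := by exact_mod_cast (by omega : 0 < b)
  have h3 : (d : ℝ) * s ^ t = e * r ^ t * (b : ℝ) ^ l := by
    have hq : (0 : ℝ) < (r : ℝ) / s := by positivity
    have h4 : (d : ℝ) = e * ((r : ℝ) / s) ^ t * (b : ℝ) ^ l := by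
      rw [pow_add] at h
      generalize (r : ℝ) / s = q at *
      field_simp at h
      linarith
    rw [h4, div_pow]
    field_simp
  obtain ⟨m, rfl | rfl⟩ := l.eq_nat_or_neg
  · rw [zpow_natCast] at h3
    exact nt_pos (m := m) (t := t) (d' := e) hco (by omega) (by exact_mod_cast h3)
  · have h5 : (d : ℝ) * s ^ t * (b : ℝ) ^ m = e * r ^ t := by
      rw [h3, zpow_neg, zpow_natCast]; field_simp
    exact nt_neg (m := m) hsf hb hr hs hco h2 hd heb (t := t) (by omega) (by exact_mod_cast h5)

theorem irr_log {b r s : ℕ} (hsf : Squarefree b) (hb : 5 ≤ b)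
    (hr : 0 < r) (hs : 0 < s) (hco : Nat.Coprime r s) (h1 : s < r) (h2 : r < b * s) :
    Irrational (Real.log ((r : ℝ) / s) / Real.log b) := by
  have hr0 : (0 : ℝ) < r := by exact_mod_cast hr
  have hs0 : (0 : ℝ) < s := by exact_mod_cast hs
  have hb1 : (1 : ℝ) < b := by exact_mod_cast (by omega : 1 < b)
  have hb0 : (0 : ℝ) < b := by linarith
  have hlb := Real.log_pos hb1
  have hq1 : (1 : ℝ) < (r : ℝ) / s := by
    rw [one_lt_div hs0]; exact_mod_cast h1
  have hlq := Real.log_pos hq1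
  rintro ⟨c, hc⟩
  have hcpos : (0 : ℝ) < c := by rw [hc]; positivity
  have hcpos' : 0 < c := by exact_mod_cast hcpos
  have hnum : 0 < c.num := Rat.num_pos.2 hcpos'
  obtain ⟨m, hm⟩ : ∃ m : ℕ, c.num = m := ⟨c.num.toNat, by omega⟩
  have hden : (0 : ℝ) < c.den := by exact_mod_cast c.den_pos
  have e1 : (c : ℝ) = m / c.den := by
    rw [Rat.cast_def, hm]; simp
  rw [e1, div_eq_div_iff hden.ne' hlb.ne'] at hc
  have e2 : Real.log ((b : ℝ) ^ m) = Real.log (((r : ℝ) / s) ^ c.den) := by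
    rw [Real.log_pow, Real.log_pow, hc]; ring
  have e3 := Real.log_injOn_pos (Set.mem_Ioi.2 (by positivity)) (Set.mem_Ioi.2 (by positivity)) e2
  rw [div_pow, eq_div_iff (by positivity)] at e3
  have e4 : s ^ c.den * b ^ m = r ^ c.den := by
    rw [mul_comm]; exact_mod_cast e3
  exact nt_no_pow hsf hb hr hs hco h1 h2 c.den_pos e4

open Classical in
/-- Representatives of the distinct boundary points. -/
noncomputable def repSet (b r s n : ℕ) : Finset (ℕ × ℕ) :=
  (Finset.Icc 1 (b - 1)) ×ˢ {0} ∪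
    ((Finset.Icc 1 (b - 1)).filter (fun d => ¬ BadDigit b r s d)) ×ˢ (Finset.Icc 1 (n - 1))

theorem mem_repSet {b r s n d i : ℕ} (hn : 1 ≤ n) (hb : 5 ≤ b) :
    (d, i) ∈ repSet b r s n ↔ 1 ≤ d ∧ d < b ∧ i < n ∧ (i = 0 ∨ ¬ BadDigit b r s d) := by
  have e1 : d ≤ b - 1 ↔ d < b := by omega
  have e2 : i ≤ n - 1 ↔ i < n := by omega
  simp only [repSet, Finset.mem_union, Finset.mem_product, Finset.mem_filter, Finset.mem_Icc,
    Finset.mem_singleton, e1, e2]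
  constructor
  · rintro (⟨⟨h1, h2⟩, h3⟩ | ⟨⟨⟨h1, h2⟩, h3⟩, h4, h5⟩)
    · exact ⟨h1, h2, by omega, Or.inl h3⟩
    · exact ⟨h1, h2, h5, Or.inr h3⟩
  · rintro ⟨h1, h2, h3, h4⟩
    rcases Nat.eq_zero_or_pos i with h | h
    · exact Or.inl ⟨⟨h1, h2⟩, h⟩
    · exact Or.inr ⟨⟨⟨h1, h2⟩, h4.resolve_left (by omega)⟩, h, h3⟩

theorem card_repSet {b r s n : ℕ} (hn : 1 ≤ n) (hb : 5 ≤ b) (hr : 0 < r) (hs : 0 < s)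
    (h2 : r < b * s) : ((repSet b r s n).card : ℤ) =
        ((b : ℤ) - 1 - ((b - 1) / r : ℕ) - ((Nat.gcd b r - 1) / s : ℕ)) * n +
          (((b - 1) / r : ℕ) + ((Nat.gcd b r - 1) / s : ℕ)) := by
  classical
  have hc := bad_card hr hs h2
  have hf := Finset.card_filter_add_card_filter_not (s := Finset.Icc 1 (b - 1)) (BadDigit b r s)
  rw [repSet, Finset.card_union_of_disjoint, Finset.card_product, Finset.card_product]
  · simp only [Nat.card_Icc, Finset.card_singleton, Nat.add_sub_cancel] at hf ⊢
    obtain ⟨N, rfl⟩ : ∃ N, n = N + 1 := ⟨n - 1, by omega⟩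
    obtain ⟨B, rfl⟩ : ∃ B, b = B + 1 := ⟨b - 1, by omega⟩
    simp only [Nat.add_sub_cancel] at hf hc ⊢
    have hf' : (((Finset.Icc 1 B).filter (fun d => ¬ BadDigit (B + 1) r s d)).card : ℤ)
        = B - ((B / r : ℕ) + ((Nat.gcd (B + 1) r - 1) / s : ℕ)) := by
      have h := hf
      have h' := hc
      zify at h h'
      push_cast
      linarith
    push_cast at hf' ⊢
    rw [hf']
    ring
  · rw [Finset.disjoint_left]
    rintro ⟨d, i⟩ h h'
    simp only [Finset.mem_product, Finset.mem_singleton, Finset.mem_Icc] at h h'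
    omega

theorem surj_repSet {b r s n : ℕ} (hn : 1 ≤ n) (hb : 5 ≤ b) (hr : 0 < r) (hs : 0 < s)
    (h1 : s < r) (i : ℕ) : ∀ d : ℕ, 1 ≤ d → d < b → i < n →
      ∃ p ∈ repSet b r s n, codeWord b ((r : ℝ) / s) n (d / ((r : ℝ) / s) ^ i)
        = codeWord b ((r : ℝ) / s) n (p.1 / ((r : ℝ) / s) ^ p.2) := by
  have hr0 : (0 : ℝ) < r := by exact_mod_cast hr
  have hs0 : (0 : ℝ) < s := by exact_mod_cast hs
  have hb0 : (0 : ℝ) < b := by exact_mod_cast (by omega : 0 < b)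
  have hq : (0 : ℝ) < (r : ℝ) / s := by positivity
  induction i with
  | zero => exact fun d hd hdb h0 => ⟨(d, 0), (mem_repSet hn hb).2 ⟨hd, hdb, h0, Or.inl rfl⟩, rfl⟩
  | succ i ih =>
    intro d hd hdb hi
    by_cases hbad : BadDigit b r s d
    · obtain ⟨d', m, hd', hdb', hm⟩ := bad_reduce hr hs h1 hd hdb hbad
      obtain ⟨p, hp, hpe⟩ := ih d' hd' hdb' (by omega)
      refine ⟨p, hp, ?_⟩
      rw [← hpe]
      have hd0 : (0 : ℝ) < d := by exact_mod_cast hd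
      rw [← codeWord_mul_zpow hb hq n (x := d / ((r : ℝ) / s) ^ (i + 1)) (by positivity) m]
      congr 1
      have hm' : (d : ℝ) * s * (b : ℝ) ^ m = d' * r := by exact_mod_cast hm
      rw [zpow_natCast, pow_succ]
      have : (d' : ℝ) = d * (b : ℝ) ^ m / ((r : ℝ) / s) := by
        field_simp; linarith
      rw [this]
      field_simp
    · exact ⟨(d, i + 1), (mem_repSet hn hb).2 ⟨hd, hdb, hi, Or.inr hbad⟩, rfl⟩

/-- Main Theorem: For squarefree `b ≥ 5` and positive rational `a`
not an integral power of `b`, writing `a = (r/s)·b^k` with `r, s` coprime and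
`1 < r/s < b`, the block complexity satisfies `p_{a,b}(n) = c·n + d` with
`c = b - 1 - ⌊(b-1)/r⌋ - ⌊(gcd(b,r)-1)/s⌋` and `d = b - 1 - c`. -/
theorem blockComplexity_linear (b : ℕ) (hb : 5 ≤ b) (hsf : Squarefree b)
    (a : ℚ) (ha : 0 < a) (hnp : ∀ j : ℤ, (a : ℝ) ≠ (b : ℝ) ^ j)
    (r s : ℕ) (k : ℤ) (hr : 0 < r) (hs : 0 < s) (hco : Nat.Coprime r s)
    (hrep : (a : ℝ) = ((r : ℝ) / s) * (b : ℝ) ^ k)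
    (h1 : (s : ℝ) < r) (h2 : (r : ℝ) < (b : ℝ) * s) :
    ∀ n : ℕ, 1 ≤ n →
      (blockComplexity (a : ℝ) b n : ℤ) =
        ((b : ℤ) - 1 - ((b - 1) / r : ℕ) - ((Nat.gcd b r - 1) / s : ℕ)) * n +
          (((b - 1) / r : ℕ) + ((Nat.gcd b r - 1) / s : ℕ)) := by
  intro n hn
  have h1' : s < r := by exact_mod_cast h1
  have h2' : r < b * s := by exact_mod_cast h2
  have hr0 : (0 : ℝ) < r := by exact_mod_cast hr
  have hs0 : (0 : ℝ) < s := by exact_mod_cast hs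
  have hb1 : (1 : ℝ) < b := by exact_mod_cast (by omega : 1 < b)
  have hb0 : (0 : ℝ) < b := by linarith
  have hq1 : (1 : ℝ) < (r : ℝ) / s := by rw [one_lt_div hs0]; exact h1
  have hq : (0 : ℝ) < (r : ℝ) / s := by positivity
  have hirr := irr_log hsf hb hr hs hco h1' h2'
  rw [← card_repSet hn hb hr hs h2', ← Set.ncard_coe_finset]
  congr 1
  rw [blockComplexity]
  symm
  have hword : ∀ m (i : Fin n), leadingDigit b ((a : ℝ) ^ (m + (i : ℕ)))
      = codeWord b ((r : ℝ) / s) n (((r : ℝ) / s) ^ m) i := by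
    intro m i
    have e : (a : ℝ) ^ (m + (i : ℕ)) = (((r : ℝ) / s) ^ m * ((r : ℝ) / s) ^ (i : ℕ))
        * (b : ℝ) ^ (k * (m + (i : ℕ) : ℕ)) := by
      rw [hrep, mul_pow, zpow_mul, zpow_natCast, pow_add ((r : ℝ) / s)]
    rw [e, ld_mul_zpow hb (by positivity)]
    rfl
  refine Set.ncard_congr
    (fun p _ => codeWord b ((r : ℝ) / s) n (p.1 / ((r : ℝ) / s) ^ p.2)) ?_ ?_ ?_
  · rintro ⟨d, i⟩ hp
    obtain ⟨hd, hdb, hi, -⟩ := (mem_repSet hn hb).1 (Finset.mem_coe.1 hp)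
    have hd0 : (0 : ℝ) < d := by exact_mod_cast hd
    have hx : (0 : ℝ) < d / ((r : ℝ) / s) ^ i := by positivity
    obtain ⟨y, hxy, hy⟩ := codeWord_right (n := n) hb hq1 hx
    obtain ⟨m, hm, l, hl1, hl2⟩ := orbit_dense hq1 hb1 hirr hx hxy
    refine ⟨m, hm, fun j => ?_⟩
    rw [hword, ← codeWord_mul_zpow hb hq n (x := ((r : ℝ) / s) ^ m) (by positivity) l, hy _ hl1.le hl2]
  · rintro ⟨d, i⟩ ⟨e, j⟩ hp hp' heq
    obtain ⟨hd, hdb, hi, hbd⟩ := (mem_repSet hn hb).1 (Finset.mem_coe.1 hp)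
    obtain ⟨he, heb, hj, hbe⟩ := (mem_repSet hn hb).1 (Finset.mem_coe.1 hp')
    rcases lt_trichotomy i j with hij | hij | hij
    · obtain ⟨l, hl⟩ := codeWord_inj hb hq1 hj hi he heb hd hdb heq.symm
      exact absurd (bad_of_eq hsf hb hr hs hco h2' he hdb hij hl) (hbe.resolve_left (by omega))
    · subst hij
      obtain ⟨l, hl⟩ := codeWord_inj hb hq1 hi hj hd hdb he heb heq
      have hde : (d : ℝ) = e * (b : ℝ) ^ l := by
        generalize (r : ℝ) / s = q at *
        field_simp at hl
        exact hl
      have e1 : leadingDigit b (d : ℝ) = d := ld_eq hb hd hdb (l := 0) (by simp) (by simp)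
      have e2 : leadingDigit b (e : ℝ) = e := ld_eq hb he heb (l := 0) (by simp) (by simp)
      have he0 : (0 : ℝ) < e := by exact_mod_cast he
      have e3 : d = e := by
        rw [← e1, hde, ld_mul_zpow hb he0, e2]
      rw [e3]
    · obtain ⟨l, hl⟩ := codeWord_inj hb hq1 hi hj hd hdb he heb heq
      exact absurd (bad_of_eq hsf hb hr hs hco h2' hd heb hij hl) (hbd.resolve_left (by omega))
  · rintro w ⟨m, hm, hw⟩
    have hww : w = codeWord b ((r : ℝ) / s) n (((r : ℝ) / s) ^ m) :=
      funext fun i => (hw i).trans (hword m i)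
    obtain ⟨d, i, hd, hdb, hi, hdi⟩ := codeWord_surj hb hq1 hn (pow_pos hq m)
    obtain ⟨p, hp, hpe⟩ := surj_repSet (s := s) hn hb hr hs h1' i d hd hdb hi
    exact ⟨p, Finset.mem_coe.2 hp, by rw [hww, hdi, hpe]⟩
end

section
/- Let b ≥ 5 be squarefree and let a be a positive integer with 1 < a < b that is not an integral power of b. Then p_{a,b}(n) = (b − ⌊(b−1)/a⌋ − gcd(a,b))·n + ⌊(b−1)/a⌋ + gcd(a,b) − 1 for all n ≥ 1. -/
namespace BC

noncomputable def mant (b : ℕ) (x : ℝ) : ℝ := x / (b : ℝ) ^ (⌊Real.logb b x⌋ : ℤ)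

lemma mant_spec {b : ℕ} (hb : 2 ≤ b) {x : ℝ} (hx : 0 < x) :
    1 ≤ mant b x ∧ mant b x < b ∧ ∃ k : ℤ, mant b x = x * (b : ℝ) ^ k ∧ x = mant b x * (b : ℝ) ^ (-k) := by
  have hb1 : (1 : ℝ) < b := by exact_mod_cast (by omega : 1 < b)
  have hb0 : (0 : ℝ) < b := by linarith
  have hp : (0 : ℝ) < (b : ℝ) ^ (⌊Real.logb b x⌋ : ℤ) := zpow_pos hb0 _
  have h1 : (b : ℝ) ^ (⌊Real.logb b x⌋ : ℤ) ≤ x := by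
    rw [← Real.rpow_intCast, ← Real.le_logb_iff_rpow_le hb1 hx]
    exact Int.floor_le _
  have h2 : x < (b : ℝ) ^ (⌊Real.logb b x⌋ + 1 : ℤ) := by
    rw [← Real.rpow_intCast, ← Real.logb_lt_iff_lt_rpow hb1 hx]
    push_cast
    exact Int.lt_floor_add_one _
  rw [zpow_add_one₀ hb0.ne'] at h2
  refine ⟨?_, ?_, -⌊Real.logb b x⌋, ?_, ?_⟩
  · unfold mant; rwa [le_div_iff₀ hp, one_mul]
  · unfold mant; rw [div_lt_iff₀ hp]; linarith
  · unfold mant; rw [zpow_neg]; rfl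
  · unfold mant; rw [neg_neg]; field_simp

lemma zpow_eq_zero_of {b : ℕ} (hb : 2 ≤ b) {y z : ℝ} (hy : 1 ≤ y) (hy2 : y < b) (hz : 1 ≤ z)
    (hz2 : z < b) {k : ℤ} (h : y = z * (b : ℝ) ^ k) : k = 0 := by
  have hb1 : (1 : ℝ) ≤ b := by exact_mod_cast (by omega : 1 ≤ b)
  have hb0 : (0 : ℝ) < b := by linarith
  rcases lt_trichotomy k 0 with hk | hk | hk
  · have : (b : ℝ) ^ k ≤ (b : ℝ) ^ (-1 : ℤ) := zpow_le_zpow_right₀ hb1 (by omega)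
    rw [zpow_neg_one] at this
    have h3 : z * (b : ℝ) ^ k ≤ z * (b : ℝ)⁻¹ := by gcongr
    have h4 : z * (b : ℝ)⁻¹ < 1 := by
      rw [← div_eq_mul_inv, div_lt_one hb0]; exact hz2
    linarith
  · exact hk
  · have : (b : ℝ) ^ (1 : ℤ) ≤ (b : ℝ) ^ k := zpow_le_zpow_right₀ hb1 (by omega)
    rw [zpow_one] at this
    nlinarith

lemma mant_unique {b : ℕ} (hb : 2 ≤ b) {x y : ℝ} (hy : 1 ≤ y) (hy2 : y < b) {k : ℤ}
    (h : x = y * (b : ℝ) ^ k) : mant b x = y := by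
  have hb0 : (0 : ℝ) < b := by exact_mod_cast (by omega : 0 < b)
  have hx : 0 < x := by rw [h]; have := zpow_pos hb0 k; positivity
  obtain ⟨h1, h2, j, h3, h4⟩ := mant_spec hb hx
  have h5 : mant b x = y * (b : ℝ) ^ (k + j) := by
    rw [h3]; nth_rw 1 [h]; rw [zpow_add₀ hb0.ne']; ring
  have := zpow_eq_zero_of hb h1 h2 hy hy2 h5
  rw [h5, this]; simp

lemma LD_unique {b : ℕ} (hb : 2 ≤ b) {x : ℝ} {d : ℕ} (hd : 1 ≤ d) (hdb : d < b) {k : ℤ}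
    (h1 : d * (b : ℝ) ^ k ≤ x) (h2 : x < (d + 1) * (b : ℝ) ^ k) : leadingDigit b x = d := by
  have hb0 : (0 : ℝ) < b := by exact_mod_cast (by omega : 0 < b)
  have hp := zpow_pos hb0 k
  have hd1 : (1 : ℝ) ≤ d := by exact_mod_cast hd
  have hd2 : (d : ℝ) + 1 ≤ b := by exact_mod_cast hdb
  have h3 : (d : ℝ) ≤ x / (b : ℝ) ^ k := by rwa [le_div_iff₀ hp]
  have h4 : x / (b : ℝ) ^ k < d + 1 := by rwa [div_lt_iff₀ hp]
  have : mant b x = x / (b : ℝ) ^ k :=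
    mant_unique hb (k := k) (by linarith) (by linarith) (by field_simp)
  have h5 : ⌊mant b x⌋ = (d : ℤ) := by
    rw [Int.floor_eq_iff, this]; push_cast; exact ⟨h3, h4⟩
  change (⌊mant b x⌋).toNat = d
  rw [h5]; simp

lemma LD_spec {b : ℕ} (hb : 2 ≤ b) {x : ℝ} (hx : 0 < x) : 1 ≤ leadingDigit b x ∧
    leadingDigit b x < b ∧ ∃ k : ℤ, leadingDigit b x * (b : ℝ) ^ k ≤ x ∧
      x < (leadingDigit b x + 1) * (b : ℝ) ^ k := by
  have hb0 : (0 : ℝ) < b := by exact_mod_cast (by omega : 0 < b)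
  obtain ⟨h1, h2, j, h3, h4⟩ := mant_spec hb hx
  have hp := zpow_pos hb0 (-j)
  have e : leadingDigit b x = (⌊mant b x⌋).toNat := rfl
  have f1 : (1 : ℤ) ≤ ⌊mant b x⌋ := by rw [Int.le_floor]; exact_mod_cast h1
  have f2 : ⌊mant b x⌋ < b := by rw [Int.floor_lt]; exact_mod_cast h2
  have e2 : ((leadingDigit b x : ℕ) : ℤ) = ⌊mant b x⌋ := by rw [e]; omega
  have e3 : ((leadingDigit b x : ℕ) : ℝ) = (⌊mant b x⌋ : ℝ) := by rw [← e2]; simp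
  refine ⟨by omega, by omega, -j, ?_, ?_⟩
  · rw [e3]; nth_rw 2 [h4]; gcongr; exact Int.floor_le _
  · rw [e3]; nth_rw 1 [h4]; gcongr; exact Int.lt_floor_add_one _

lemma LD_mul_zpow {b : ℕ} (hb : 2 ≤ b) {x : ℝ} (hx : 0 < x) (j : ℤ) :
    leadingDigit b (x * (b : ℝ) ^ j) = leadingDigit b x := by
  have hb0 : (0 : ℝ) < b := by exact_mod_cast (by omega : 0 < b)
  obtain ⟨h1, h2, k, h3, h4⟩ := LD_spec hb hx
  have hp := zpow_pos hb0 j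
  refine LD_unique hb h1 h2 (k := k + j) ?_ ?_
  · rw [zpow_add₀ hb0.ne', ← mul_assoc]; gcongr
  · rw [zpow_add₀ hb0.ne', ← mul_assoc]; gcongr

/-- breakpoints -/
noncomputable def sg (a b i d : ℕ) : ℝ := mant b ((d : ℝ) / (a : ℝ) ^ i)

noncomputable def S (a b n : ℕ) : Finset ℝ :=
  (Finset.range n ×ˢ Finset.Icc 1 (b - 1)).image (fun q => sg a b q.1 q.2)

lemma mem_S {a b n : ℕ} {s : ℝ} : s ∈ S a b n ↔ ∃ i d, i < n ∧ 1 ≤ d ∧ d ≤ b - 1 ∧ sg a b i d = s := by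
  simp only [S, Finset.mem_image, Finset.mem_product, Finset.mem_range, Finset.mem_Icc, Prod.exists]
  grind

lemma sg_spec {a b i d : ℕ} (hb : 2 ≤ b) (ha : 1 < a) (hd : 1 ≤ d) :
    1 ≤ sg a b i d ∧ sg a b i d < b ∧ ∃ k : ℤ, sg a b i d * (a : ℝ) ^ i = d * (b : ℝ) ^ k := by
  have ha0 : (0 : ℝ) < a := by exact_mod_cast (by omega : 0 < a)
  have hd0 : (0 : ℝ) < d := by exact_mod_cast hd
  obtain ⟨h1, h2, k, h3, h4⟩ := mant_spec hb (x := (d : ℝ) / (a : ℝ) ^ i) (by positivity)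
  refine ⟨h1, h2, k, ?_⟩
  unfold sg; rw [h3]; field_simp

lemma sg_unique {a b i d : ℕ} (hb : 2 ≤ b) (ha : 1 < a) {s : ℝ} (h1 : 1 ≤ s) (h2 : s < b)
    {k : ℤ} (h : s * (a : ℝ) ^ i = d * (b : ℝ) ^ k) : sg a b i d = s := by
  have ha0 : (0 : ℝ) < a := by exact_mod_cast (by omega : 0 < a)
  have hb0 : (0 : ℝ) < b := by exact_mod_cast (by omega : 0 < b)
  have hp := zpow_pos hb0 k
  refine mant_unique hb h1 h2 (k := -k) ?_
  rw [zpow_neg]; field_simp; linarith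

noncomputable def code (a b n : ℕ) (x : ℝ) : Fin n → ℕ := fun i => leadingDigit b (x * (a : ℝ) ^ (i : ℕ))

lemma code_between {a b n : ℕ} (hb : 2 ≤ b) (ha : 1 < a) (hn : 1 ≤ n) {x : ℝ} (hx : 1 ≤ x)
    (hxb : x < b) : ∃ p ∈ S a b n, code a b n x = code a b n p := by
  have ha0 : (0 : ℝ) < a := by exact_mod_cast (by omega : 0 < a)
  have hb0 : (0 : ℝ) < b := by exact_mod_cast (by omega : 0 < b)
  have hb1 : (1 : ℝ) < b := by exact_mod_cast (by omega : 1 < b)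
  have h1 : (1 : ℝ) ∈ S a b n := by
    rw [mem_S]
    refine ⟨0, 1, by omega, le_rfl, by omega, sg_unique hb ha le_rfl hb1 (k := 0) (by simp)⟩
  obtain ⟨p, hp, hmax⟩ := Finset.exists_max_image ((S a b n).filter (· ≤ x)) id
    ⟨1, by simp [h1, hx]⟩
  simp only [Finset.mem_filter, id] at hp hmax
  have hp1 : 1 ≤ p := hmax 1 ⟨h1, hx⟩
  refine ⟨p, hp.1, ?_⟩
  funext i
  have hai : (0 : ℝ) < (a : ℝ) ^ (i : ℕ) := by positivity
  obtain ⟨g1, g2, k, g3, g4⟩ := LD_spec hb (x := x * (a : ℝ) ^ (i : ℕ)) (by positivity)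
  symm
  refine LD_unique hb g1 g2 (k := k) ?_ (lt_of_le_of_lt ?_ g4)
  · set d := leadingDigit b (x * (a : ℝ) ^ (i : ℕ))
    have hz : (d : ℝ) * (b : ℝ) ^ k / (a : ℝ) ^ (i : ℕ) ≤ p := by
      by_cases hz1 : 1 ≤ (d : ℝ) * (b : ℝ) ^ k / (a : ℝ) ^ (i : ℕ)
      · have hzx : (d : ℝ) * (b : ℝ) ^ k / (a : ℝ) ^ (i : ℕ) ≤ x := by
          rwa [div_le_iff₀ hai]
        refine hmax _ ⟨?_, hzx⟩
        rw [mem_S]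
        exact ⟨i, d, i.2, g1, by omega, sg_unique hb ha hz1 (by linarith) (k := k) (by field_simp)⟩
      · linarith
    rwa [div_le_iff₀ hai] at hz
  · gcongr; exact hp.2

lemma code_inj {a b n : ℕ} (hb : 5 ≤ b) (ha : 1 < a) (hn : 1 ≤ n) {p q : ℝ} (hp : p ∈ S a b n)
    (hq : q ∈ S a b n) (hpq : p < q) (h : code a b n p = code a b n q) : False := by
  have hb2 : 2 ≤ b := by omega
  have ha0 : (0 : ℝ) < a := by exact_mod_cast (by omega : 0 < a)
  have hb0 : (5 : ℝ) ≤ b := by exact_mod_cast hb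
  rw [mem_S] at hp hq
  obtain ⟨i', d', -, hd', hdb', rfl⟩ := hp
  obtain ⟨i, d, hi, hd, hdb, rfl⟩ := hq
  set p := sg a b i' d'
  set q := sg a b i d with hqdef
  obtain ⟨p1, p2, -⟩ := sg_spec (i := i') hb2 ha hd'
  obtain ⟨q1, q2, k, hk⟩ := sg_spec (i := i) hb2 ha hd
  change 1 ≤ p at p1
  change p < b at p2
  rw [← hqdef] at q1 q2 hk
  have hai : (0 : ℝ) < (a : ℝ) ^ i := by positivity
  have hd1 : (1 : ℝ) ≤ d := by exact_mod_cast hd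
  -- first digit
  have c0 : leadingDigit b p = leadingDigit b q := by
    have := congrFun h ⟨0, by omega⟩
    simpa [code] using this
  have first : ∀ x : ℝ, 1 ≤ x → x < b → ((leadingDigit b x : ℕ) : ℝ) ≤ x ∧ x < leadingDigit b x + 1 := by
    intro x hx hxb
    have : leadingDigit b x = ⌊x⌋₊ := by
      refine LD_unique hb2 (k := 0) ?_ ?_ ?_ ?_
      · rw [Nat.one_le_floor_iff]; exact hx
      · rw [Nat.floor_lt (by linarith)]; exact hxb
      · simpa using Nat.floor_le (by linarith)
      · simpa using Nat.lt_floor_add_one x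
    rw [this]
    exact ⟨Nat.floor_le (by linarith), Nat.lt_floor_add_one x⟩
  have f1 := first p p1 p2
  have f2 := first q q1 q2
  rw [c0] at f1
  have f3 : (1 : ℝ) ≤ leadingDigit b q := by exact_mod_cast (LD_spec hb2 (by linarith : 0 < q)).1
  have hq2p : q < 2 * p := by linarith
  have ci : leadingDigit b (p * (a : ℝ) ^ i) = leadingDigit b (q * (a : ℝ) ^ i) := congrFun h ⟨i, hi⟩
  have hbk : (0 : ℝ) < (b : ℝ) ^ k := zpow_pos (by linarith) k
  have cq : leadingDigit b (q * (a : ℝ) ^ i) = d :=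
    LD_unique hb2 hd (by omega) (k := k) hk.ge (by rw [hk]; nlinarith)
  rw [cq] at ci
  obtain ⟨-, -, j, e1, e2⟩ := LD_spec hb2 (x := p * (a : ℝ) ^ i) (by positivity)
  rw [ci] at e1 e2
  have s1 : p * (a : ℝ) ^ i < q * (a : ℝ) ^ i := by gcongr
  have s2 : q * (a : ℝ) ^ i < 2 * (p * (a : ℝ) ^ i) := by nlinarith
  have hb1 : (1 : ℝ) ≤ b := by linarith
  rcases le_or_gt k j with hkj | hkj
  · have := zpow_le_zpow_right₀ hb1 hkj
    nlinarith
  · have h5 := zpow_le_zpow_right₀ hb1 (show j + 1 ≤ k by omega)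
    rw [zpow_add_one₀ (by linarith)] at h5
    have hbj : (0 : ℝ) < (b : ℝ) ^ j := zpow_pos (by linarith) j
    have h6 : (b : ℝ) ^ j * 5 ≤ (b : ℝ) ^ k := le_trans (by gcongr) h5
    have h7 : (d : ℝ) * ((b : ℝ) ^ j * 5) ≤ d * (b : ℝ) ^ k := by gcongr
    nlinarith

lemma code_right {a b n : ℕ} (hb : 2 ≤ b) (ha : 1 < a) {p : ℝ} (hp : 0 < p) :
    ∃ q, p < q ∧ ∀ x, p ≤ x → x < q → code a b n x = code a b n p := by
  have ha0 : (0 : ℝ) < a := by exact_mod_cast (by omega : 0 < a)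
  have hb0 : (0 : ℝ) < b := by exact_mod_cast (by omega : 0 < b)
  have key : ∀ i : ℕ, ∃ q, p < q ∧ ∀ x, p ≤ x → x < q →
      leadingDigit b (x * (a : ℝ) ^ i) = leadingDigit b (p * (a : ℝ) ^ i) := by
    intro i
    have hai : (0 : ℝ) < (a : ℝ) ^ i := by positivity
    obtain ⟨g1, g2, k, g3, g4⟩ := LD_spec hb (x := p * (a : ℝ) ^ i) (by positivity)
    refine ⟨(leadingDigit b (p * (a : ℝ) ^ i) + 1) * (b : ℝ) ^ k / (a : ℝ) ^ i, ?_, ?_⟩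
    · rwa [lt_div_iff₀ hai]
    · intro x hx hx2
      rw [lt_div_iff₀ hai] at hx2
      refine LD_unique hb g1 g2 (k := k) (g3.trans ?_) hx2
      gcongr
  choose f hf1 hf2 using key
  obtain ⟨q, hq1, hq2⟩ : ∃ q, p < q ∧ ∀ i : Fin n, q ≤ f i := by
    rcases Nat.eq_zero_or_pos n with rfl | hn
    · exact ⟨p + 1, by linarith, fun i => i.elim0⟩
    · obtain ⟨i, -, hi⟩ := Finset.exists_min_image (Finset.univ : Finset (Fin n)) (fun i => f i)
        ⟨⟨0, hn⟩, Finset.mem_univ _⟩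
      exact ⟨f i, hf1 _, fun j => hi j (Finset.mem_univ _)⟩
  refine ⟨q, hq1, fun x h1 h2 => ?_⟩
  funext i
  exact hf2 i x h1 (h2.trans_le (hq2 i))

lemma irr {a b : ℕ} (hb : 5 ≤ b) (hsf : Squarefree b) (ha1 : 1 < a)
    (hnp : ∀ j : ℕ, a ≠ b ^ j) : Irrational (Real.log a / Real.log b) := by
  have hb1 : (1 : ℝ) < b := by exact_mod_cast (by omega : 1 < b)
  have ha1' : (1 : ℝ) < a := by exact_mod_cast ha1
  have hlb := Real.log_pos hb1
  have hla := Real.log_pos ha1'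
  rintro ⟨r, hr⟩
  have hr0 : (0 : ℝ) < r := by rw [hr]; positivity
  have hr0' : 0 < r := by exact_mod_cast hr0
  have hnum : 0 < r.num := Rat.num_pos.2 hr0'
  obtain ⟨m, hm⟩ := Int.eq_ofNat_of_zero_le hnum.le
  have hm0 : 0 < m := by omega
  have hrd : (r : ℝ) = m / r.den := by
    rw [Rat.cast_def, hm]; simp
  have hden : (0 : ℝ) < r.den := by exact_mod_cast r.den_pos
  have e : (r.den : ℝ) * Real.log a = m * Real.log b := by
    rw [hrd] at hr
    field_simp at hr
    linarith
  have e2 : a ^ r.den = b ^ m := by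
    have : (a : ℝ) ^ r.den = (b : ℝ) ^ m := by
      apply Real.log_injOn_pos (by simp; positivity) (by simp; positivity)
      rw [Real.log_pow, Real.log_pow, e]
    exact_mod_cast this
  have hdn := r.den_pos
  have hv : ∀ p, r.den * a.factorization p = m * b.factorization p := by
    intro p
    have := congrArg (fun x => x.factorization p) e2
    simpa using this
  -- `r.den ∣ m`
  obtain ⟨p, hp, hpb⟩ := Nat.exists_prime_and_dvd (show b ≠ 1 by omega)
  have hle := hsf.natFactorization_le_one p
  have hge : 1 ≤ b.factorization p := (hp.dvd_iff_one_le_factorization (by omega)).1 hpb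
  have h1 : b.factorization p = 1 := by omega
  have h2 := hv p
  rw [h1, mul_one] at h2
  apply hnp (a.factorization p)
  apply Nat.eq_of_factorization_eq (by omega) (by positivity)
  intro q
  have h3 := hv q
  rw [← h2, mul_assoc] at h3
  simpa using Nat.eq_of_mul_eq_mul_left hdn h3

lemma dens {a b : ℕ} (hb : 5 ≤ b) (ha1 : 1 < a)
    (hirr : Irrational (Real.log a / Real.log b)) {p q : ℝ} (hp : 0 < p) (hpq : p < q) :
    ∃ m : ℕ, 1 ≤ m ∧ ∃ k : ℤ, p < (a : ℝ) ^ m * (b : ℝ) ^ k ∧ (a : ℝ) ^ m * (b : ℝ) ^ k < q := by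
  have hb1 : (1 : ℝ) < b := by exact_mod_cast (by omega : 1 < b)
  have ha1' : (1 : ℝ) < a := by exact_mod_cast ha1
  have hlb := Real.log_pos hb1
  have : Fact (0 < Real.log b) := ⟨hlb⟩
  have hd : DenseRange (fun m : ℕ => m • ((Real.log a : ℝ) : AddCircle (Real.log b))) :=
    denseRange_zsmul_iff_nsmul.1 (AddCircle.denseRange_zsmul_coe_iff.2 hirr)
  have hop : IsOpen ((fun x : ℝ => (x : AddCircle (Real.log b))) ''
      Set.Ioo (Real.log (p / a)) (Real.log (q / a))) :=
    QuotientAddGroup.isOpenMap_coe _ isOpen_Ioo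
  have hlt : Real.log (p / a) < Real.log (q / a) := by
    apply Real.log_lt_log (by positivity); gcongr
  obtain ⟨m, y, hy, hym⟩ := hd.exists_mem_open hop ((Set.nonempty_Ioo.2 hlt).image _)
  have h0 : ((y - m • Real.log a : ℝ) : AddCircle (Real.log b)) = 0 := by
    rw [AddCircle.coe_sub, AddCircle.coe_nsmul, sub_eq_zero]; exact hym
  rw [AddCircle.coe_eq_zero_iff] at h0
  obtain ⟨k, hk⟩ := h0
  have hy2 : y = Real.log ((a : ℝ) ^ m * (b : ℝ) ^ k) := by
    have := zpow_pos (by linarith : (0 : ℝ) < b) k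
    rw [Real.log_mul (by positivity) this.ne', Real.log_pow, Real.log_zpow]
    simp only [zsmul_eq_mul, nsmul_eq_mul] at hk
    linarith
  have hpos : (0 : ℝ) < (a : ℝ) ^ m * (b : ℝ) ^ k := by
    have := zpow_pos (by linarith : (0 : ℝ) < b) k
    positivity
  rw [hy2] at hy
  have ha0 : (0 : ℝ) < a := by linarith
  have hq0 : 0 < q := hp.trans hpq
  have u1 := (Real.log_lt_log_iff (by positivity) hpos).1 hy.1
  have u2 := (Real.log_lt_log_iff hpos (by positivity)).1 hy.2
  rw [div_lt_iff₀ ha0] at u1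
  rw [lt_div_iff₀ ha0] at u2
  refine ⟨m + 1, by omega, k, ?_, ?_⟩
  · rw [pow_succ]; linarith
  · rw [pow_succ]; linarith


lemma complexity_eq {a b n : ℕ} (hb : 5 ≤ b) (hsf : Squarefree b) (ha1 : 1 < a)
    (hnp : ∀ j : ℕ, a ≠ b ^ j) (hn : 1 ≤ n) :
    blockComplexity (a : ℝ) b n = (S a b n).card := by
  have hb2 : 2 ≤ b := by omega
  have ha0 : (0 : ℝ) < a := by exact_mod_cast (by omega : 0 < a)
  have hb0 : (0 : ℝ) < b := by exact_mod_cast (by omega : 0 < b)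
  have hset : {w : Fin n → ℕ |
      ∃ m : ℕ, 1 ≤ m ∧ ∀ i : Fin n, w i = leadingDigit b ((a : ℝ) ^ (m + (i : ℕ)))} =
      code a b n '' (S a b n : Set ℝ) := by
    have shift : ∀ (m : ℕ) (k : ℤ) (i : Fin n), leadingDigit b ((a : ℝ) ^ (m + (i : ℕ))) =
        code a b n ((a : ℝ) ^ m * (b : ℝ) ^ k) i := by
      intro m k i
      unfold code
      rw [← LD_mul_zpow hb2 (by positivity) k]
      congr 1
      rw [pow_add]; ring
    ext w
    simp only [Set.mem_setOf_eq, Set.mem_image]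
    constructor
    · rintro ⟨m, -, hw⟩
      obtain ⟨h1, h2, k, h3, -⟩ := mant_spec hb2 (x := (a : ℝ) ^ m) (by positivity)
      obtain ⟨p, hp, hc⟩ := code_between (n := n) hb2 ha1 hn h1 h2
      refine ⟨p, hp, ?_⟩
      rw [← hc, h3]
      funext i
      rw [hw i, ← shift]
    · rintro ⟨p, hp, rfl⟩
      have hp1 : 1 ≤ p := by
        obtain ⟨i, d, -, hd, -, rfl⟩ := mem_S.1 hp
        exact (sg_spec hb2 ha1 hd).1
      obtain ⟨q, hq, hc⟩ := code_right (n := n) hb2 ha1 (by linarith : 0 < p)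
      obtain ⟨m, hm, k, h1, h2⟩ := dens hb ha1 (irr hb hsf ha1 hnp) (by linarith) hq
      refine ⟨m, hm, fun i => ?_⟩
      rw [shift m k i, hc _ h1.le h2]
  unfold blockComplexity
  rw [hset, Set.ncard_image_of_injOn, Set.ncard_coe_finset]
  intro p hp q hq h
  rcases lt_trichotomy p q with h1 | h1 | h1
  · exact (code_inj hb ha1 hn hp hq h1 h).elim
  · exact h1
  · exact (code_inj hb ha1 hn hq hp h1 h.symm).elim

def Bad (a b d : ℕ) : Prop := a ∣ d ∨ ∃ e, 1 ≤ e ∧ e ≤ b - 1 ∧ e * a = d * b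

lemma bad_of {a b d e t k : ℕ} (hb : 5 ≤ b) (hsf : Squarefree b) (ha1 : 1 < a) (ha2 : a < b)
    (hd : 1 ≤ d) (he : 1 ≤ e) (heb : e ≤ b - 1) (ht : 1 ≤ t)
    (h : e * a ^ t = d * b ^ k) : Bad a b d := by
  rcases lt_trichotomy k t with hk | hk | hk
  · left
    rw [← Nat.factorization_prime_le_iff_dvd (by omega) (by omega)]
    intro p hp
    have h1 : e.factorization p + t * a.factorization p =
        d.factorization p + k * b.factorization p := by
      have := congrArg (fun x => x.factorization p) h
      rw [Nat.factorization_mul (by omega) (by positivity),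
        Nat.factorization_mul (by omega) (by positivity)] at this
      simpa using this
    have h2 := hsf.natFactorization_le_one p
    have h3 : k * b.factorization p ≤ k := by nlinarith
    rcases Nat.eq_zero_or_pos (a.factorization p) with h0 | h0
    · omega
    · obtain ⟨u, rfl⟩ : ∃ u, t = u + 1 := ⟨t - 1, by omega⟩
      have : u ≤ u * a.factorization p := by nlinarith
      rw [add_mul] at h1
      omega
  · subst hk
    right
    have hda : d < a := by
      by_contra hcon
      push Not at hcon
      obtain ⟨u, rfl⟩ : ∃ u, k = u + 1 := ⟨k - 1, by omega⟩
      have h1 : a * b ^ (u + 1) ≤ d * b ^ (u + 1) := by gcongr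
      have h2 : e * a ^ (u + 1) < b * a ^ (u + 1) := by
        have : 0 < a ^ (u + 1) := by positivity
        have : e < b := by omega
        gcongr
      have h3 : a ^ u ≤ b ^ u := by gcongr
      have h4 : b * a ^ (u + 1) ≤ a * b ^ (u + 1) := by
        calc b * a ^ (u + 1) = a * b * a ^ u := by ring
          _ ≤ a * b * b ^ u := by gcongr
          _ = _ := by ring
      omega
    obtain ⟨g, a', b', hg, hcop, rfl, rfl⟩ := Nat.exists_coprime' (m := a) (n := b)
      (Nat.gcd_pos_of_pos_left _ (by omega))
    have h1 : e * a' ^ k = d * b' ^ k := by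
      have : 0 < g ^ k := by positivity
      apply Nat.eq_of_mul_eq_mul_right this
      rw [mul_pow, mul_pow] at h
      linarith
    have h2 : a' ∣ d := by
      have h3 : a' ^ k ∣ d :=
        (Nat.Coprime.pow k k hcop).dvd_of_dvd_mul_right (Dvd.intro_left _ h1)
      exact (dvd_pow_self a' (by omega)).trans h3
    obtain ⟨c, rfl⟩ := h2
    have h4 : b' * c * (a' * g) = a' * c * (b' * g) := by ring
    refine ⟨b' * c, ?_, ?_, h4⟩
    · by_contra hcon
      have : b' * c = 0 := by omega
      rw [this] at h4
      have : 0 < a' * c * (b' * g) := by apply Nat.mul_pos <;> omega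
      omega
    · have : b' * c < b' * g := by
        by_contra hcon
        push Not at hcon
        have : b' * g * (a' * g) ≤ b' * c * (a' * g) := by gcongr
        have : a' * c * (b' * g) < a' * g * (b' * g) := by
          apply Nat.mul_lt_mul_of_pos_right hda; omega
        linarith
      omega
  · exfalso
    have h1 : e * a ^ t < b * b ^ t := by
      have : 0 < b ^ t := by positivity
      have h2 : a ^ t ≤ b ^ t := by gcongr
      have h3 : e < b := by omega
      calc e * a ^ t ≤ e * b ^ t := by gcongr
        _ < b * b ^ t := by gcongr
    have h2 : b ^ (t + 1) ≤ b ^ k := Nat.pow_le_pow_right (by omega) hk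
    have h3 : 1 * b ^ k ≤ d * b ^ k := by gcongr
    rw [pow_succ] at h2
    linarith

lemma sg_mem_iff {a b n d : ℕ} (hb : 5 ≤ b) (hsf : Squarefree b) (ha1 : 1 < a) (ha2 : a < b)
    (hn : 1 ≤ n) (hd : 1 ≤ d) (hdb : d ≤ b - 1) : sg a b n d ∈ S a b n ↔ Bad a b d := by
  have hb2 : 2 ≤ b := by omega
  have ha0 : (0 : ℝ) < a := by exact_mod_cast (by omega : 0 < a)
  have hb0 : (0 : ℝ) < b := by exact_mod_cast (by omega : 0 < b)
  rw [mem_S]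
  obtain ⟨h1, h2, k, hk⟩ := sg_spec (i := n) hb2 ha1 hd
  constructor
  · rintro ⟨i, e, hi, he, heb, hs⟩
    obtain ⟨-, -, l, hl⟩ := sg_spec (i := i) hb2 ha1 he
    rw [hs] at hl
    obtain ⟨t, rfl⟩ : ∃ t, n = i + t := ⟨n - i, by omega⟩
    have h3 : (e : ℝ) * (a : ℝ) ^ t = d * (b : ℝ) ^ (k - l) := by
      rw [pow_add, ← mul_assoc, hl] at hk
      have := zpow_pos hb0 l
      rw [zpow_sub₀ hb0.ne']
      field_simp
      linarith
    rcases le_or_gt 0 (k - l) with h0 | h0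
    · obtain ⟨j, hj⟩ := Int.eq_ofNat_of_zero_le h0
      rw [hj] at h3
      have h4 : e * a ^ t = d * b ^ j := by
        rw [zpow_natCast] at h3
        exact_mod_cast h3
      exact bad_of hb hsf ha1 ha2 hd he heb (by omega) h4
    · exfalso
      obtain ⟨j, hj⟩ : ∃ j : ℕ, k - l = -((j : ℤ) + 1) := ⟨(-(k - l) - 1).toNat, by omega⟩
      rw [hj, zpow_neg] at h3
      have h4 : e * a ^ t * b ^ (j + 1) = d := by
        have : (e : ℝ) * (a : ℝ) ^ t * (b : ℝ) ^ (j + 1) = d := by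
          rw [h3]
          have : (b : ℝ) ^ ((j : ℤ) + 1) = (b : ℝ) ^ (j + 1) := by exact_mod_cast zpow_natCast (b : ℝ) (j + 1)
          rw [this]; field_simp
        exact_mod_cast this
      have h5 : 1 ≤ e * a ^ t := Nat.mul_pos he (by positivity)
      have h6 : b ≤ b ^ (j + 1) := Nat.le_self_pow (by omega) b
      have : 1 * b ≤ e * a ^ t * b ^ (j + 1) := Nat.mul_le_mul h5 h6
      omega
  · obtain ⟨n, rfl⟩ : ∃ m, n = m + 1 := ⟨n - 1, by omega⟩
    rintro (⟨e, rfl⟩ | ⟨e, he, heb, h⟩)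
    · refine ⟨n, e, by omega, Nat.pos_of_ne_zero (by rintro rfl; simp at hd), ?_, ?_⟩
      · have : e ≤ a * e := Nat.le_mul_of_pos_left e (by omega)
        omega
      · refine sg_unique hb2 ha1 h1 h2 (k := k) ?_
        push_cast at hk ⊢
        rw [pow_succ] at hk
        have : (a : ℝ) * (sg a b (n + 1) (a * e) * (a : ℝ) ^ n) = a * (e * (b : ℝ) ^ k) := by linarith
        exact mul_left_cancel₀ ha0.ne' this
    · refine ⟨n, e, by omega, he, heb, ?_⟩
      refine sg_unique hb2 ha1 h1 h2 (k := k - 1) ?_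
      have h' : (e : ℝ) * a = d * b := by exact_mod_cast h
      rw [zpow_sub_one₀ hb0.ne']
      rw [pow_succ] at hk
      apply mul_left_cancel₀ ha0.ne'
      calc (a : ℝ) * (sg a b (n + 1) d * (a : ℝ) ^ n) = d * (b : ℝ) ^ k := by linarith
        _ = (d * b) * ((b : ℝ) ^ k * (b : ℝ)⁻¹) := by field_simp
        _ = _ := by rw [← h']; ring

lemma sg_inj {a b n d e : ℕ} (hb : 2 ≤ b) (ha1 : 1 < a) (hd : 1 ≤ d) (hdb : d ≤ b - 1)
    (he : 1 ≤ e) (heb : e ≤ b - 1) (h : sg a b n d = sg a b n e) : d = e := by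
  have hb0 : (0 : ℝ) < b := by exact_mod_cast (by omega : 0 < b)
  obtain ⟨-, -, k, hk⟩ := sg_spec (i := n) hb ha1 hd
  obtain ⟨-, -, l, hl⟩ := sg_spec (i := n) hb ha1 he
  have key : ∀ (c : ℕ) (j : ℤ), 1 ≤ c → c ≤ b - 1 → leadingDigit b (c * (b : ℝ) ^ j) = c := by
    intro c j h1 h2
    have := zpow_pos hb0 j
    exact LD_unique hb h1 (by omega) (k := j) le_rfl (by linarith)
  rw [h, hl] at hk
  rw [← key d k hd hdb, ← key e l he heb, hk]

open Classical in
lemma bad_card {a b : ℕ} (hb : 5 ≤ b) (ha1 : 1 < a) (ha2 : a < b) :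
    ((Finset.Icc 1 (b - 1)).filter (fun d => Bad a b d)).card = (b - 1) / a + (Nat.gcd a b - 1) := by
  obtain ⟨a', b', hcop, ha, hbb⟩ := Nat.exists_coprime a b
  set g := Nat.gcd a b with hg
  have hg0 : 0 < g := Nat.gcd_pos_of_pos_left _ (by omega)
  have ha' : 0 < a' := Nat.pos_of_ne_zero (by rintro rfl; omega)
  have hb' : 0 < b' := Nat.pos_of_ne_zero (by rintro rfl; omega)
  have hset : (Finset.Icc 1 (b - 1)).filter (fun d => Bad a b d) =
      (Finset.Icc 1 ((b - 1) / a)).image (fun e => a * e) ∪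
      (Finset.Icc 1 (g - 1)).image (fun c => a' * c) := by
    ext d
    simp only [Finset.mem_filter, Finset.mem_union, Finset.mem_image, Finset.mem_Icc]
    constructor
    · rintro ⟨⟨h1, h2⟩, ⟨e, rfl⟩ | ⟨e, he, heb, h⟩⟩
      · left
        refine ⟨e, ⟨Nat.pos_of_ne_zero (by rintro rfl; simp at h1), ?_⟩, rfl⟩
        rw [Nat.le_div_iff_mul_le (by omega), mul_comm]; exact h2
      · right
        have h3 : e * a' = d * b' := by
          apply Nat.eq_of_mul_eq_mul_right hg0
          rw [mul_assoc, mul_assoc, ← ha, ← hbb]; exact h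
        obtain ⟨c, rfl⟩ : a' ∣ d := hcop.dvd_of_dvd_mul_right (Dvd.intro_left _ h3)
        refine ⟨c, ⟨Nat.pos_of_ne_zero (by rintro rfl; simp at h1), ?_⟩, rfl⟩
        have h4 : e = c * b' := by
          apply Nat.eq_of_mul_eq_mul_right ha'
          rw [h3]; ring
        have : c * b' < g * b' := by rw [mul_comm g]; omega
        have := Nat.lt_of_mul_lt_mul_right this
        omega
    · rintro (⟨e, ⟨h1, h2⟩, rfl⟩ | ⟨c, ⟨h1, h2⟩, rfl⟩)
      · rw [Nat.le_div_iff_mul_le (by omega), mul_comm] at h2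
        exact ⟨⟨Nat.mul_pos (by omega) h1, h2⟩, Or.inl ⟨e, rfl⟩⟩
      · have h3 : a' * c < a' * g := by gcongr; omega
        refine ⟨⟨Nat.mul_pos ha' h1, by omega⟩, Or.inr ⟨b' * c, Nat.mul_pos hb' h1, ?_, ?_⟩⟩
        · have : b' * c < b' * g := by gcongr; omega
          omega
        · conv_lhs => rw [ha]
          conv_rhs => rw [hbb]
          ring
  rw [hset, Finset.card_union_of_disjoint, Finset.card_image_of_injective,
    Finset.card_image_of_injective]
  · simp
  · intro x y h; exact Nat.eq_of_mul_eq_mul_left ha' h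
  · intro x y h; exact Nat.eq_of_mul_eq_mul_left (by omega : 0 < a) h
  · rw [Finset.disjoint_left]
    intro d h1 h2
    simp only [Finset.mem_image, Finset.mem_Icc] at h1 h2
    obtain ⟨e, ⟨h1, -⟩, rfl⟩ := h1
    obtain ⟨c, ⟨h3, h4⟩, h5⟩ := h2
    have h6 : a' * c < a' * g := by gcongr; omega
    have h7 : a * 1 ≤ a * e := by gcongr
    omega

lemma S_one {a b : ℕ} (hb : 5 ≤ b) (ha1 : 1 < a) : (S a b 1).card = b - 1 := by
  have : S a b 1 = (Finset.Icc 1 (b - 1)).image (sg a b 0) := by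
    ext s
    simp only [mem_S, Finset.mem_image, Finset.mem_Icc]
    constructor
    · rintro ⟨i, d, hi, h1, h2, h⟩
      obtain rfl : i = 0 := by omega
      exact ⟨d, ⟨h1, h2⟩, h⟩
    · rintro ⟨d, ⟨h1, h2⟩, h⟩
      exact ⟨0, d, by omega, h1, h2, h⟩
  rw [this, Finset.card_image_of_injOn]
  · simp
  · intro d hd e he h
    simp only [Finset.coe_Icc, Set.mem_Icc] at hd he
    exact sg_inj (by omega) ha1 hd.1 hd.2 he.1 he.2 h

open Classical in
lemma S_succ {a b n : ℕ} (hb : 5 ≤ b) (hsf : Squarefree b) (ha1 : 1 < a) (ha2 : a < b)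
    (hn : 1 ≤ n) :
    (S a b (n + 1)).card + ((b - 1) / a + (Nat.gcd a b - 1)) = (S a b n).card + (b - 1) := by
  have hS : S a b (n + 1) = S a b n ∪
      ((Finset.Icc 1 (b - 1)).filter (fun d => ¬ Bad a b d)).image (sg a b n) := by
    ext s
    simp only [mem_S, Finset.mem_union, Finset.mem_image, Finset.mem_filter, Finset.mem_Icc]
    constructor
    · rintro ⟨i, d, hi, h1, h2, h⟩
      by_cases hin : i < n
      · exact Or.inl ⟨i, d, hin, h1, h2, h⟩
      · obtain rfl : i = n := by omega
        by_cases hB : Bad a b d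
        · left
          rw [← sg_mem_iff hb hsf ha1 ha2 hn h1 h2, h, mem_S] at hB
          exact hB
        · exact Or.inr ⟨d, ⟨⟨h1, h2⟩, hB⟩, h⟩
    · rintro (⟨i, d, hi, h⟩ | ⟨d, ⟨⟨h1, h2⟩, -⟩, h⟩)
      · exact ⟨i, d, by omega, h⟩
      · exact ⟨n, d, by omega, h1, h2, h⟩
  have hf := Finset.card_filter_add_card_filter_not (s := Finset.Icc 1 (b - 1))
    (fun d => Bad a b d)
  rw [bad_card hb ha1 ha2] at hf
  simp only [Nat.card_Icc] at hf
  rw [hS, Finset.card_union_of_disjoint, Finset.card_image_of_injOn]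
  · omega
  · intro d hd e he h
    simp only [Finset.coe_filter, Finset.mem_Icc, Set.mem_setOf_eq] at hd he
    exact sg_inj (by omega) ha1 hd.1.1 hd.1.2 he.1.1 he.1.2 h
  · rw [Finset.disjoint_right]
    intro s hs
    simp only [Finset.mem_image, Finset.mem_filter, Finset.mem_Icc] at hs
    obtain ⟨d, ⟨⟨h1, h2⟩, hB⟩, rfl⟩ := hs
    rwa [sg_mem_iff hb hsf ha1 ha2 hn h1 h2]

end BC

/-- For squarefree `b ≥ 5` and an integer `a` with `1 < a < b` which is
not an integral power of `b`,
`p_{a,b}(n) = (b - ⌊(b-1)/a⌋ - gcd(a,b))·n + ⌊(b-1)/a⌋ + gcd(a,b) - 1`. -/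
theorem blockComplexity_int_lt (b a : ℕ) (hb : 5 ≤ b) (hsf : Squarefree b)
    (ha1 : 1 < a) (ha2 : a < b) (hnp : ∀ j : ℕ, a ≠ b ^ j) :
    ∀ n : ℕ, 1 ≤ n →
      (blockComplexity (a : ℝ) b n : ℤ) =
        ((b : ℤ) - ((b - 1) / a : ℕ) - (Nat.gcd a b : ℕ)) * n +
          (((b - 1) / a : ℕ) + (Nat.gcd a b : ℕ) - 1) := by
  intro n hn
  rw [BC.complexity_eq hb hsf ha1 hnp hn]
  have hg0 : 0 < Nat.gcd a b := Nat.gcd_pos_of_pos_left _ (by omega)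
  induction n, hn using Nat.le_induction with
  | base =>
    rw [BC.S_one hb ha1]
    push_cast [Nat.cast_sub (show 1 ≤ b by omega)]
    ring
  | succ n hn ih =>
    have h := BC.S_succ hb hsf ha1 ha2 hn
    have h2 : ((BC.S a b (n + 1)).card : ℤ) + (((b - 1) / a : ℕ) + ((Nat.gcd a b : ℕ) - 1)) =
        (BC.S a b n).card + (b - 1) := by omega
    rw [ih] at h2
    rw [Nat.cast_add_one]
    linear_combination h2
end

section
/- Let b ≥ 5 and a ≥ 2 be integers such that a² divides b and b is not a rational power of a. Then the block complexity of the leading digit sequence of a^n in base b satisfies p_{a,b}(3) − p_{a,b}(2) ≠ p_{a,b}(2) − p_{a,b}(1); in particular p_{a,b}(n) is not a linear function of n for n ≥ 1. -/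
lemma ld_eq_s13 (b : ℕ) (hb : 2 ≤ b) (y t : ℝ) (j : ℤ) (hy : y = t * (b : ℝ) ^ j)
    (h1 : 1 ≤ t) (h2 : t < b) : leadingDigit b y = ⌊t⌋₊ := by
  have hb0 : (1 : ℝ) < b := by exact_mod_cast hb
  have hbp : (0 : ℝ) < b := by linarith
  have hp : (0 : ℝ) < (b : ℝ) ^ j := zpow_pos hbp j
  have hl : ⌊Real.logb b y⌋ = j := by
    rw [hy, Real.logb_mul (by linarith) hp.ne', ← Real.rpow_intCast, Real.logb_rpow hbp hb0.ne',
      Int.floor_add_intCast]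
    have : ⌊Real.logb b t⌋ = 0 := by
      rw [Int.floor_eq_zero_iff]
      refine ⟨Real.logb_nonneg hb0 h1, ?_⟩
      rw [Real.logb_lt_iff_lt_rpow hb0 (by linarith)]
      simpa using h2
    omega
  unfold leadingDigit
  rw [hl, hy, mul_div_assoc, div_self hp.ne', mul_one]
  rfl

lemma exists_mant (a b : ℕ) (ha : 2 ≤ a) (hb : 2 ≤ b) (m : ℕ) :
    ∃ (j : ℤ) (x : ℝ), 1 ≤ x ∧ x < b ∧ (a : ℝ) ^ m = x * (b : ℝ) ^ j := by
  have hb0 : (1 : ℝ) < b := by exact_mod_cast hb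
  have hbp : (0 : ℝ) < b := by linarith
  have hap : (0 : ℝ) < (a : ℝ) ^ m := by positivity
  obtain ⟨j, h1, h2⟩ := exists_mem_Ico_zpow hap hb0
  have hp : (0 : ℝ) < (b : ℝ) ^ j := zpow_pos hbp j
  refine ⟨j, (a : ℝ) ^ m / (b : ℝ) ^ j, ?_, ?_, ?_⟩
  · rwa [le_div_iff₀ hp, one_mul]
  · rw [div_lt_iff₀ hp]
    rwa [zpow_add_one₀ hbp.ne', mul_comm] at h2
  · field_simp

lemma exists_hit (a b : ℕ) (ha : 2 ≤ a) (hb : 2 ≤ b)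
    (hnp : ∀ q : ℚ, 0 < q → (b : ℝ) ≠ (a : ℝ) ^ (q : ℝ)) (l r : ℝ) (hl : 1 ≤ l) (hlr : l < r)
    (hr : r ≤ b) :
    ∃ (m : ℕ) (j : ℤ) (x : ℝ), 1 ≤ m ∧ l ≤ x ∧ x < r ∧ (a : ℝ) ^ m = x * (b : ℝ) ^ j := by
  have hb0 : (1 : ℝ) < b := by exact_mod_cast hb
  have ha0 : (1 : ℝ) < a := by exact_mod_cast ha
  have hbp : (0 : ℝ) < b := by linarith
  have hap : (0 : ℝ) < a := by linarith
  have hlb : 0 < Real.log b := Real.log_pos hb0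
  have hla : 0 < Real.log a := Real.log_pos ha0
  have : Fact (0 < Real.log b) := ⟨hlb⟩
  have hirr : Irrational (Real.log a / Real.log b) := by
    rintro ⟨q, hq⟩
    have hq0 : (0 : ℝ) < q := by rw [hq]; positivity
    refine hnp q⁻¹ (inv_pos.mpr (by exact_mod_cast hq0)) ?_
    rw [Real.rpow_def_of_pos hap, Rat.cast_inv, hq, inv_div, mul_div_cancel₀ _ hla.ne',
      Real.exp_log hbp]
  have hd : DenseRange (· • ((Real.log a : ℝ) : AddCircle (Real.log b)) :
      ℕ → AddCircle (Real.log b)) :=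
    denseRange_zsmul_iff_nsmul.1 (AddCircle.denseRange_zsmul_coe_iff.2 hirr)
  have ho : IsOpen ((QuotientAddGroup.mk : ℝ → AddCircle (Real.log b)) ''
      Set.Ioo (Real.log l) (Real.log r)) := QuotientAddGroup.isOpenMap_coe _ isOpen_Ioo
  have hlog : Real.log l < Real.log r := Real.log_lt_log (by linarith) hlr
  obtain ⟨m, y, ⟨hy1, hy2⟩, hm⟩ := hd.exists_mem_open ho ((Set.nonempty_Ioo.2 hlog).image _)
  have hm' : ((y : ℝ) : AddCircle (Real.log b)) = ((m • Real.log a : ℝ) : AddCircle (Real.log b)) := by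
    rw [AddCircle.coe_nsmul]; exact hm
  obtain ⟨j, hj⟩ := AddSubgroup.mem_zmultiples_iff.1 (QuotientAddGroup.eq.1 hm')
  simp only [zsmul_eq_mul, nsmul_eq_mul] at hj
  have hy0 : 0 < y := lt_of_le_of_lt (Real.log_nonneg hl) hy1
  have hyb : y < Real.log b := lt_of_lt_of_le hy2 (Real.log_le_log (by linarith) hr)
  refine ⟨m, j, Real.exp y, ?_, ?_, ?_, ?_⟩
  · by_contra hm0
    have : m = 0 := by omega
    subst this
    have h1 : (j : ℝ) * Real.log b = - y := by rw [hj]; simp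
    have h2 : (j : ℝ) < 0 := by
      by_contra h
      push Not at h
      nlinarith
    have h3 : j ≤ -1 := by
      have : j < 0 := by exact_mod_cast h2
      omega
    have h4 : (j : ℝ) ≤ -1 := by exact_mod_cast h3
    nlinarith
  · exact ((Real.log_lt_iff_lt_exp (by linarith)).1 hy1).le
  · exact (Real.lt_log_iff_exp_lt (by linarith)).1 hy2
  · rw [← Real.exp_log (pow_pos hap m), ← Real.exp_log (zpow_pos hbp j), ← Real.exp_add,
      Real.log_pow, Real.log_zpow, hj]
    congr 1; ring

lemma ld_shift (a b : ℕ) (hb : 2 ≤ b) (m : ℕ) (j : ℤ) (x : ℝ)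
    (hx : (a : ℝ) ^ m = x * (b : ℝ) ^ j) (i : ℕ) (e : ℤ) (t : ℝ)
    (ht : (a : ℝ) ^ i * x = t * (b : ℝ) ^ e) (h1 : 1 ≤ t) (h2 : t < b) :
    leadingDigit b ((a : ℝ) ^ (m + i)) = ⌊t⌋₊ := by
  have hbp : (b : ℝ) ≠ 0 := by positivity
  refine ld_eq_s13 b hb _ t (e + j) ?_ h1 h2
  rw [pow_add, hx, zpow_add₀ hbp, ← mul_assoc, ← ht]; ring

/-- the digits of one block, in terms of the mantissa -/
lemma digits (a c : ℕ) (ha : 2 ≤ a) (hc : 1 ≤ c) (m : ℕ) (j : ℤ) (x : ℝ)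
    (hx : (a : ℝ) ^ m = x * ((a ^ 2 * c : ℕ) : ℝ) ^ j) (h1 : 1 ≤ x)
    (h2 : x < (a ^ 2 * c : ℕ)) :
    leadingDigit (a ^ 2 * c) ((a : ℝ) ^ (m + 0)) = ⌊x⌋₊ ∧
    (x < (a * c : ℕ) → leadingDigit (a ^ 2 * c) ((a : ℝ) ^ (m + 1)) = ⌊x * a⌋₊) ∧
    ((a * c : ℕ) ≤ x → leadingDigit (a ^ 2 * c) ((a : ℝ) ^ (m + 1)) = ⌊x⌋₊ / (a * c)) ∧
    (x < c → leadingDigit (a ^ 2 * c) ((a : ℝ) ^ (m + 2)) = ⌊x * a * a⌋₊) ∧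
    (c ≤ x → leadingDigit (a ^ 2 * c) ((a : ℝ) ^ (m + 2)) = ⌊x⌋₊ / c) := by
  have ha' : (2 : ℝ) ≤ a := by exact_mod_cast ha
  have hc' : (1 : ℝ) ≤ c := by exact_mod_cast hc
  have hb : 2 ≤ a ^ 2 * c := by nlinarith
  have hac : (0 : ℝ) < a * c := by positivity
  have key := ld_shift a (a ^ 2 * c) hb m j x hx
  refine ⟨key 0 0 x (by simp) h1 h2, fun h => ?_, fun h => ?_, fun h => ?_, fun h => ?_⟩
  · refine key 1 0 (x * a) (by simp; ring) (by nlinarith) ?_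
    push_cast at h ⊢
    nlinarith
  · rw [← Nat.floor_div_natCast]
    push_cast at h h2
    refine key 1 1 _ ?_ ?_ ?_
    · push_cast; field_simp
    · push_cast; rwa [one_le_div hac]
    · push_cast
      rw [div_lt_iff₀ hac]
      nlinarith [mul_pos hac hac, one_le_mul_of_one_le_of_one_le (by linarith : (1:ℝ) ≤ a) hc',
        mul_le_mul_of_nonneg_left (one_le_mul_of_one_le_of_one_le (by linarith : (1:ℝ) ≤ a) hc')
          (by positivity : (0:ℝ) ≤ a ^ 2 * c)]
  · refine key 2 0 (x * a * a) (by simp; ring) ?_ ?_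
    · nlinarith [mul_le_mul h1 (by linarith : (1:ℝ) ≤ a) (by norm_num) (by linarith)]
    · push_cast
      have : (0 : ℝ) < a ^ 2 := by positivity
      nlinarith
  · rw [← Nat.floor_div_natCast]
    push_cast at h2
    have hcp : (0 : ℝ) < c := by linarith
    refine key 2 1 _ ?_ ?_ ?_
    · push_cast; field_simp
    · rwa [one_le_div hcp]
    · push_cast
      rw [div_lt_iff₀ hcp]
      nlinarith [mul_le_mul_of_nonneg_left hc' (by positivity : (0:ℝ) ≤ a ^ 2 * c)]

/-- digit `i` of the block attached to `k = ⌊a² x⌋` -/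
def dig (a c k : ℕ) : ℕ → ℕ
  | 0 => k / a / a
  | 1 => if k / a < a ^ 2 * c then k / a else k / a / a / (a * c)
  | _ => if k < a ^ 2 * c then k else k / a / a / c

lemma dig_correct (a c : ℕ) (ha : 2 ≤ a) (hc : 1 ≤ c) (m : ℕ) (j : ℤ) (x : ℝ)
    (hx : (a : ℝ) ^ m = x * ((a ^ 2 * c : ℕ) : ℝ) ^ j) (h1 : 1 ≤ x)
    (h2 : x < (a ^ 2 * c : ℕ)) (i : ℕ) (hi : i < 3) :
    leadingDigit (a ^ 2 * c) ((a : ℝ) ^ (m + i)) = dig a c ⌊x * a * a⌋₊ i := by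
  obtain ⟨d0, d1, d1', d2, d2'⟩ := digits a c ha hc m j x hx h1 h2
  have ha0 : (a : ℝ) ≠ 0 := by positivity
  have hap : (0 : ℝ) < a := by positivity
  have e1 : ⌊x * a * a⌋₊ / a = ⌊x * a⌋₊ := by
    rw [← Nat.floor_div_natCast, mul_div_cancel_right₀ _ ha0]
  have e0 : ⌊x * a⌋₊ / a = ⌊x⌋₊ := by
    rw [← Nat.floor_div_natCast, mul_div_cancel_right₀ _ ha0]
  have f1 : ⌊x * a⌋₊ < a ^ 2 * c ↔ x < (a * c : ℕ) := by
    rw [Nat.floor_lt (by positivity)]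
    push_cast
    rw [show (a : ℝ) ^ 2 * c = (a * c) * a by ring, mul_lt_mul_iff_left₀ hap]
  have f2 : ⌊x * a * a⌋₊ < a ^ 2 * c ↔ x < c := by
    rw [Nat.floor_lt (by positivity)]
    push_cast
    rw [show (a : ℝ) ^ 2 * c = c * a * a by ring, mul_lt_mul_iff_left₀ hap,
      mul_lt_mul_iff_left₀ hap]
  interval_cases i
  · simp only [dig, e1, e0]; exact d0
  · simp only [dig, e1, e0, f1]
    split_ifs with h
    · exact d1 h
    · exact d1' (not_lt.1 h)
  · simp only [dig, e1, e0, f2]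
    split_ifs with h
    · exact d2 h
    · exact d2' (not_lt.1 h)

lemma complexity_eq (a c : ℕ) (ha : 2 ≤ a) (hc : 1 ≤ c)
    (hnp : ∀ q : ℚ, 0 < q → ((a ^ 2 * c : ℕ) : ℝ) ≠ (a : ℝ) ^ (q : ℝ)) (n : ℕ) (hn : n ≤ 3) :
    blockComplexity (a : ℝ) (a ^ 2 * c) n =
      ((Finset.Ico (a ^ 2) (a ^ 2 * (a ^ 2 * c))).image
        (fun k => fun i : Fin n => dig a c k i)).card := by
  have hb : 2 ≤ a ^ 2 * c := by nlinarith
  have ha' : (2 : ℝ) ≤ a := by exact_mod_cast ha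
  have hap : (0 : ℝ) < a := by positivity
  have ha2 : (0 : ℝ) < (a : ℝ) ^ 2 := by positivity
  rw [← Set.ncard_coe_finset]
  unfold blockComplexity
  congr 1
  ext w
  simp only [Set.mem_ofPred_eq, Finset.coe_image, Set.mem_image, Finset.mem_coe, Finset.mem_Ico]
  constructor
  · rintro ⟨m, -, hw⟩
    obtain ⟨j, x, h1, h2, hx⟩ := exists_mant a (a ^ 2 * c) ha hb m
    refine ⟨⌊x * a * a⌋₊, ⟨?_, ?_⟩, ?_⟩
    · apply Nat.le_floor
      push_cast
      nlinarith
    · rw [Nat.floor_lt (by positivity)]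
      push_cast at h2 ⊢
      nlinarith
    · funext i
      rw [hw i, dig_correct a c ha hc m j x hx h1 h2 i (by omega)]
  · rintro ⟨k, ⟨hk1, hk2⟩, rfl⟩
    have hk1' : (a : ℝ) ^ 2 ≤ k := by exact_mod_cast hk1
    have hk2' : (k : ℝ) + 1 ≤ a ^ 2 * (a ^ 2 * c : ℕ) := by exact_mod_cast hk2
    obtain ⟨m, j, x, hm, h1, h2, hx⟩ := exists_hit a (a ^ 2 * c) ha hb hnp
      (k / (a : ℝ) ^ 2) ((k + 1) / (a : ℝ) ^ 2) (by rwa [one_le_div ha2])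
      (by gcongr; linarith) (by rw [div_le_iff₀ ha2]; linarith)
    have hx1 : 1 ≤ x := le_trans (by rwa [one_le_div ha2]) h1
    have hx2 : x < (a ^ 2 * c : ℕ) :=
      lt_of_lt_of_le h2 (by rw [div_le_iff₀ ha2]; linarith)
    refine ⟨m, hm, fun i => ?_⟩
    rw [dig_correct a c ha hc m j x hx hx1 hx2 i (by omega)]
    rw [div_le_iff₀ ha2] at h1
    rw [lt_div_iff₀ ha2] at h2
    have : ⌊x * a * a⌋₊ = k := by
      rw [Nat.floor_eq_iff (by positivity)]
      constructor <;> nlinarith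
    rw [this]

lemma bnd (a c k : ℕ) (hap : 0 < a) (h2 : k < a ^ 2 * c) :
    k * a < a ^ 2 * (a ^ 2 * c) := by
  have h3 : k * a < (a ^ 2 * c) * a := Nat.mul_lt_mul_of_pos_right h2 hap
  have h4 : (a ^ 2 * c) * a ≤ (a ^ 2 * c) * a ^ 2 :=
    Nat.mul_le_mul_left _ (Nat.le_self_pow (by norm_num) a)
  linarith

lemma card1 (a c : ℕ) (ha : 2 ≤ a) :
    ((Finset.Ico (a ^ 2) (a ^ 2 * (a ^ 2 * c))).image
        (fun k => fun i : Fin 1 => dig a c k i)).card = a ^ 2 * c - 1 := by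
  have hap : 0 < a := by omega
  have : ((Finset.Ico (a ^ 2) (a ^ 2 * (a ^ 2 * c))).image
        (fun k => fun i : Fin 1 => dig a c k i)) =
      (Finset.Ico 1 (a ^ 2 * c)).image (fun k => ![k]) := by
    ext w
    simp only [Finset.mem_image, Finset.mem_Ico]
    constructor
    · rintro ⟨k, ⟨h1, h2⟩, rfl⟩
      refine ⟨k / a / a, ⟨?_, ?_⟩, ?_⟩
      · rw [Nat.div_div_eq_div_mul, Nat.le_div_iff_mul_le (by positivity)]; nlinarith
      · rw [Nat.div_div_eq_div_mul, Nat.div_lt_iff_lt_mul (by positivity)]; nlinarith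
      · funext i; fin_cases i; simp [dig]
    · rintro ⟨k, ⟨h1, h2⟩, rfl⟩
      refine ⟨k * a * a, ⟨by nlinarith, by nlinarith [mul_lt_mul_of_pos_left h2 (pow_pos hap 2)]⟩, ?_⟩
      funext i; fin_cases i; simp [dig, hap]
  rw [this, Finset.card_image_of_injective, Nat.card_Ico]
  intro k l h
  simpa using congrFun h 0

lemma card2 (a c : ℕ) (ha : 2 ≤ a) (hc : 1 ≤ c) :
    ((Finset.Ico (a ^ 2) (a ^ 2 * (a ^ 2 * c))).image
        (fun k => fun i : Fin 2 => dig a c k i)).card =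
      (a ^ 2 * c - a) + (a ^ 2 * c - a * c) := by
  have hap : 0 < a := by omega
  have : ((Finset.Ico (a ^ 2) (a ^ 2 * (a ^ 2 * c))).image
        (fun k => fun i : Fin 2 => dig a c k i)) =
      (Finset.Ico a (a ^ 2 * c)).image (fun k => ![k / a, k]) ∪
      (Finset.Ico (a * c) (a ^ 2 * c)).image (fun k => ![k, k / (a * c)]) := by
    ext w
    simp only [Finset.mem_union, Finset.mem_image, Finset.mem_Ico]
    constructor
    · rintro ⟨k, ⟨h1, h2⟩, rfl⟩
      by_cases h : k / a < a ^ 2 * c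
      · left
        refine ⟨k / a, ⟨?_, h⟩, ?_⟩
        · rw [Nat.le_div_iff_mul_le (by positivity)]; nlinarith
        · funext i; fin_cases i <;> simp [dig, h]
      · right
        refine ⟨k / a / a, ⟨?_, ?_⟩, ?_⟩
        · rw [Nat.le_div_iff_mul_le (by positivity)]; nlinarith
        · rw [Nat.div_div_eq_div_mul, Nat.div_lt_iff_lt_mul (by positivity)]; nlinarith
        · funext i; fin_cases i <;> simp [dig, h]
    · rintro (⟨k, ⟨h1, h2⟩, rfl⟩ | ⟨k, ⟨h1, h2⟩, rfl⟩)
      · refine ⟨k * a, ⟨by nlinarith, bnd a c k hap h2⟩, ?_⟩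
        funext i; fin_cases i <;> simp [dig, hap, h2]
      · refine ⟨k * a * a, ⟨by nlinarith, by nlinarith [mul_lt_mul_of_pos_left h2 (pow_pos hap 2)]⟩, ?_⟩
        have : ¬ k * a < a ^ 2 * c := by nlinarith
        funext i; fin_cases i <;> simp [dig, hap, this]
  rw [this, Finset.card_union_of_disjoint, Finset.card_image_of_injective,
    Finset.card_image_of_injective, Nat.card_Ico, Nat.card_Ico]
  · intro k l h
    simpa using congrFun h 0
  · intro k l h
    simpa using congrFun h 1
  · rw [Finset.disjoint_left]
    simp only [Finset.mem_image, Finset.mem_Ico]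
    rintro w ⟨k, ⟨h1, h2⟩, rfl⟩ ⟨l, ⟨h3, h4⟩, h⟩
    have e : l = k / a := by simpa using congrFun h 0
    have : k / a < a * c := by rw [Nat.div_lt_iff_lt_mul hap]; nlinarith
    omega

lemma card3 (a c : ℕ) (ha : 2 ≤ a) (hc : 1 ≤ c) :
    ((Finset.Ico (a ^ 2) (a ^ 2 * (a ^ 2 * c))).image
        (fun k => fun i : Fin 3 => dig a c k i)).card =
      (a ^ 2 * c - a ^ 2) + ((a ^ 2 * c - a * c) + (a ^ 2 * c - a * c)) := by
  have hap : 0 < a := by omega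
  have : ((Finset.Ico (a ^ 2) (a ^ 2 * (a ^ 2 * c))).image
        (fun k => fun i : Fin 3 => dig a c k i)) =
      (Finset.Ico (a ^ 2) (a ^ 2 * c)).image (fun k => ![k / a / a, k / a, k]) ∪
      ((Finset.Ico (a * c) (a ^ 2 * c)).image (fun k => ![k / a, k, k / a / c]) ∪
      (Finset.Ico (a * c) (a ^ 2 * c)).image (fun k => ![k, k / (a * c), k / c])) := by
    ext w
    simp only [Finset.mem_union, Finset.mem_image, Finset.mem_Ico]
    constructor
    · rintro ⟨k, ⟨h1, h2⟩, rfl⟩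
      by_cases h : k / a < a ^ 2 * c
      · by_cases h' : k < a ^ 2 * c
        · left
          refine ⟨k, ⟨h1, h'⟩, ?_⟩
          funext i; fin_cases i <;> simp [dig, h, h']
        · right; left
          refine ⟨k / a, ⟨?_, h⟩, ?_⟩
          · rw [Nat.le_div_iff_mul_le (by positivity)]; nlinarith
          · funext i; fin_cases i <;> simp [dig, h, h']
      · right; right
        have h' : ¬ k < a ^ 2 * c := fun h' => h (lt_of_le_of_lt (Nat.div_le_self _ _) h')
        refine ⟨k / a / a, ⟨?_, ?_⟩, ?_⟩
        · rw [Nat.le_div_iff_mul_le (by positivity)]; nlinarith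
        · rw [Nat.div_div_eq_div_mul, Nat.div_lt_iff_lt_mul (by positivity)]; nlinarith
        · funext i; fin_cases i <;> simp [dig, h, h']
    · rintro (⟨k, ⟨h1, h2⟩, rfl⟩ | ⟨k, ⟨h1, h2⟩, rfl⟩ | ⟨k, ⟨h1, h2⟩, rfl⟩)
      · refine ⟨k, ⟨h1, lt_of_le_of_lt (Nat.le_mul_of_pos_right k hap) (bnd a c k hap h2)⟩, ?_⟩
        have : k / a < a ^ 2 * c := lt_of_le_of_lt (Nat.div_le_self _ _) h2
        funext i; fin_cases i <;> simp [dig, h2, this]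
      · have : ¬ k * a < a ^ 2 * c := by nlinarith
        refine ⟨k * a, ⟨by nlinarith, bnd a c k hap h2⟩, ?_⟩
        funext i; fin_cases i <;> simp [dig, hap, h2, this]
      · refine ⟨k * a * a, ⟨by nlinarith, by nlinarith [mul_lt_mul_of_pos_left h2 (pow_pos hap 2)]⟩, ?_⟩
        have : ¬ k * a < a ^ 2 * c := by nlinarith
        have h' : ¬ k * a * a < a ^ 2 * c := by nlinarith
        funext i; fin_cases i <;> simp [dig, hap, this, h']
  rw [this, Finset.card_union_of_disjoint, Finset.card_union_of_disjoint,
    Finset.card_image_of_injective, Finset.card_image_of_injective,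
    Finset.card_image_of_injective, Nat.card_Ico, Nat.card_Ico]
  · intro k l h
    simpa using congrFun h 0
  · intro k l h
    simpa using congrFun h 1
  · intro k l h
    simpa using congrFun h 2
  · rw [Finset.disjoint_left]
    simp only [Finset.mem_image, Finset.mem_Ico]
    rintro w ⟨k, ⟨h1, h2⟩, rfl⟩ ⟨l, ⟨h3, h4⟩, h⟩
    have e : l = k / a := by simpa using congrFun h 0
    have : k / a < a * c := by rw [Nat.div_lt_iff_lt_mul hap]; nlinarith
    omega
  · rw [Finset.disjoint_left]
    simp only [Finset.mem_union, Finset.mem_image, Finset.mem_Ico]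
    rintro w ⟨k, ⟨h1, h2⟩, rfl⟩ (⟨l, ⟨h3, h4⟩, h⟩ | ⟨l, ⟨h3, h4⟩, h⟩)
    · have e : l / a = k / a / a := by simpa using congrFun h 0
      have : k / a / a < c := by
        rw [Nat.div_div_eq_div_mul, Nat.div_lt_iff_lt_mul (by positivity)]; nlinarith
      have : c ≤ l / a := by rw [Nat.le_div_iff_mul_le hap]; nlinarith
      omega
    · have e : l = k / a / a := by simpa using congrFun h 0
      have : k / a / a < c := by
        rw [Nat.div_div_eq_div_mul, Nat.div_lt_iff_lt_mul (by positivity)]; nlinarith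
      nlinarith

/-- For integers `b ≥ 5`, `a ≥ 2` with `a² ∣ b` and `b` not a rational
power of `a`, the block complexity satisfies
`p_{a,b}(3) - p_{a,b}(2) ≠ p_{a,b}(2) - p_{a,b}(1)`; in particular it is not linear. -/
theorem blockComplexity_not_linear (b a : ℕ) (hb : 5 ≤ b) (ha : 2 ≤ a)
    (hdvd : a ^ 2 ∣ b) (hnp : ∀ q : ℚ, 0 < q → (b : ℝ) ≠ (a : ℝ) ^ (q : ℝ)) :
    (blockComplexity (a : ℝ) b 3 : ℤ) - blockComplexity (a : ℝ) b 2 ≠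
      (blockComplexity (a : ℝ) b 2 : ℤ) - blockComplexity (a : ℝ) b 1 := by
  obtain ⟨c, rfl⟩ := hdvd
  have hc : 1 ≤ c := by
    rcases Nat.eq_zero_or_pos c with rfl | h
    · simp at hb
    · exact h
  rw [complexity_eq a c ha hc hnp 3 le_rfl, complexity_eq a c ha hc hnp 2 (by norm_num),
    complexity_eq a c ha hc hnp 1 (by norm_num), card1 a c ha, card2 a c ha hc, card3 a c ha hc]
  have g1 : 1 ≤ a ^ 2 * c := by omega
  have g2 : a ≤ a ^ 2 * c := by nlinarith
  have g3 : a * c ≤ a ^ 2 * c := by nlinarith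
  have g4 : a ^ 2 ≤ a ^ 2 * c := by nlinarith
  push_cast [Nat.cast_sub g1, Nat.cast_sub g2, Nat.cast_sub g3, Nat.cast_sub g4]
  intro h
  have ha' : (2 : ℤ) ≤ a := by exact_mod_cast ha
  nlinarith
end

section
/- Let b ≥ 5 be squarefree and a a positive rational not an integral power of b, with a = (r/s)·b^k in lowest terms and 1 < r/s < b. Then the slope c_{a,b} = b − 1 − ⌊(b−1)/r⌋ − ⌊(gcd(b,r)−1)/s⌋ satisfies ⌊(b−1)/2⌋ ≤ c_{a,b} ≤ b − 1, and consequently ⌊(b−1)/2⌋·n + ⌈(b−1)/2⌉ ≤ p_{a,b}(n) ≤ (b−1)·n for all n ≥ 1. -/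
/-- Leading digit of `b ^ x` as a 1-periodic function. -/
noncomputable def dg (b : ℕ) (x : ℝ) : ℕ := ⌊(b : ℝ) ^ (Int.fract x)⌋₊

lemma dg_spec {b : ℕ} (hb : 1 < b) (x : ℝ) :
    1 ≤ dg b x ∧ dg b x + 1 ≤ b ∧ (⌊x⌋ : ℝ) + Real.logb b (dg b x : ℝ) ≤ x ∧
      x < ⌊x⌋ + Real.logb b ((dg b x + 1 : ℕ) : ℝ) := by
  have hb' : (1 : ℝ) < b := by exact_mod_cast hb
  have h0 : (1 : ℝ) ≤ (b : ℝ) ^ (Int.fract x) :=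
    Real.one_le_rpow hb'.le (Int.fract_nonneg x)
  have hlt : (b : ℝ) ^ (Int.fract x) < b := by
    calc (b : ℝ) ^ (Int.fract x) < (b : ℝ) ^ (1 : ℝ) :=
          Real.rpow_lt_rpow_of_exponent_lt hb' (Int.fract_lt_one x)
      _ = b := Real.rpow_one _
  have h1 : 1 ≤ dg b x := by
    unfold dg
    exact Nat.le_floor (by simpa using h0)
  have h2 : (dg b x : ℝ) ≤ (b : ℝ) ^ (Int.fract x) := Nat.floor_le (by linarith)
  have h3 : (b : ℝ) ^ (Int.fract x) < ((dg b x + 1 : ℕ) : ℝ) := by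
    push_cast
    exact Nat.lt_floor_add_one _
  have hxf := Int.floor_add_fract x
  refine ⟨h1, ?_, ?_, ?_⟩
  · have : (dg b x : ℝ) < b := lt_of_le_of_lt h2 hlt
    exact_mod_cast this
  · have : Real.logb b (dg b x : ℝ) ≤ Int.fract x :=
      (Real.logb_le_iff_le_rpow hb' (by exact_mod_cast h1)).2 h2
    linarith
  · have : Int.fract x < Real.logb b ((dg b x + 1 : ℕ) : ℝ) :=
      (Real.lt_logb_iff_rpow_lt hb' (by positivity)).2 h3
    linarith

lemma dg_eq {b : ℕ} (hb : 1 < b) {d : ℕ} (hd : 1 ≤ d) (hdb : d + 1 ≤ b) (k : ℤ) {x : ℝ}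
    (h1 : (k : ℝ) + Real.logb b (d : ℝ) ≤ x)
    (h2 : x < k + Real.logb b ((d + 1 : ℕ) : ℝ)) : dg b x = d := by
  have hb' : (1 : ℝ) < b := by exact_mod_cast hb
  have hd0 : (0 : ℝ) ≤ Real.logb b (d : ℝ) :=
    Real.logb_nonneg hb' (by exact_mod_cast hd)
  have hd1 : Real.logb b ((d + 1 : ℕ) : ℝ) ≤ 1 := by
    rw [Real.logb_le_iff_le_rpow hb' (by positivity), Real.rpow_one]
    exact_mod_cast hdb
  have hk : Int.fract x = x - k := by
    rw [Int.fract_eq_iff]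
    exact ⟨by linarith, by linarith, k, by ring⟩
  unfold dg
  rw [Nat.floor_eq_iff (by positivity), hk]
  constructor
  · exact (Real.logb_le_iff_le_rpow hb' (by exact_mod_cast hd)).1 (by linarith)
  · have := (Real.lt_logb_iff_rpow_lt (y := ((d + 1 : ℕ) : ℝ)) hb' (by positivity)).1
      (show x - k < _ by linarith)
    simpa using this

lemma leadingDigit_pow {b : ℕ} (hb : 1 < b) {a : ℝ} (ha : 0 < a) (m : ℕ) :
    leadingDigit b (a ^ m) = dg b (m * Real.logb b a) := by
  have hb' : (1 : ℝ) < b := by exact_mod_cast hb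
  unfold leadingDigit dg
  rw [Real.logb_pow, Int.fract, Real.rpow_sub (by linarith), mul_comm (m : ℝ), Real.rpow_mul
    (by linarith), Real.rpow_logb (by linarith) (by linarith) ha, Real.rpow_natCast,
    Real.rpow_intCast, Int.floor_toNat]

lemma width_lt {b : ℕ} (hb : 5 ≤ b) {d : ℕ} (hd : 1 ≤ d) :
    Real.logb b ((d + 1 : ℕ) : ℝ) - Real.logb b (d : ℝ) < 1 / 2 := by
  have hb' : (1 : ℝ) < b := by exact_mod_cast (by omega : 1 < b)
  have hd' : (1 : ℝ) ≤ d := by exact_mod_cast hd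
  have hlog : 0 < Real.log b := Real.log_pos hb'
  have h1 : Real.log ((d + 1 : ℕ) : ℝ) ≤ Real.log 2 + Real.log d := by
    rw [← Real.log_mul (by norm_num) (by positivity)]
    apply Real.log_le_log (by positivity)
    push_cast
    linarith
  have h2 : 2 * Real.log 2 < Real.log b := by
    have : (2 : ℝ) * Real.log 2 = Real.log (2 ^ 2) := by rw [Real.log_pow]; norm_num
    rw [this]
    apply Real.log_lt_log (by norm_num)
    have : (5 : ℝ) ≤ b := by exact_mod_cast hb
    linarith
  unfold Real.logb
  rw [← sub_div, div_lt_iff₀ hlog]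
  linarith

/-- Equal digits: points are close mod 1. -/
lemma close_of_dg_eq {b : ℕ} (hb : 5 ≤ b) {x y : ℝ} (h : dg b x = dg b y) :
    |(x - ⌊x⌋) - (y - ⌊y⌋)| < 1 / 2 := by
  obtain ⟨h1, _, h3, h4⟩ := dg_spec (by omega : 1 < b) x
  obtain ⟨_, _, h3', h4'⟩ := dg_spec (by omega : 1 < b) y
  rw [← h] at h3' h4'
  have := width_lt hb h1
  rw [abs_lt]
  constructor <;> linarith

/-- The set of break points. -/
noncomputable def brk (b : ℕ) (α : ℝ) (n : ℕ) : Finset ℝ :=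
  (Finset.range n ×ˢ Finset.Ioc 0 (b - 1)).image
    (fun q => Int.fract (Real.logb b (q.2 : ℝ) - q.1 * α))

noncomputable def wd (b : ℕ) (α : ℝ) (n : ℕ) (x : ℝ) : Fin n → ℕ :=
  fun i => dg b (x + (i : ℕ) * α)

lemma mem_brk {b : ℕ} {α : ℝ} {n : ℕ} {p : ℝ} : p ∈ brk b α n ↔
    ∃ i < n, ∃ d, 1 ≤ d ∧ d < b ∧ p = Int.fract (Real.logb b (d : ℝ) - i * α) := by
  unfold brk
  simp only [Finset.mem_image, Finset.mem_product, Finset.mem_range, Finset.mem_Ioc, Prod.exists]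
  constructor
  · rintro ⟨i, d, ⟨hi, hd, hdb⟩, rfl⟩
    exact ⟨i, hi, d, hd, by omega, rfl⟩
  · rintro ⟨i, hi, d, hd, hdb, rfl⟩
    exact ⟨i, d, ⟨hi, hd, by omega⟩, rfl⟩

/-- One-sided injectivity. -/
lemma wd_inj_aux {b : ℕ} (hb : 5 ≤ b) {α : ℝ} {n : ℕ} {p q δ : ℝ} {N : ℤ}
    (hq : q ∈ brk b α n) (hw : wd b α n p = wd b α n q)
    (hδ : p - q = δ + N) (h1 : -(1 / 2) < δ) : 0 ≤ δ := by
  obtain ⟨i, hi, d, hd, hdb, rfl⟩ := mem_brk.1 hq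
  by_contra! hneg
  have h := congrFun hw ⟨i, hi⟩
  simp only [wd] at h
  set q := Int.fract (Real.logb b (d : ℝ) - i * α) with hqd
  obtain ⟨z, hz⟩ : ∃ z : ℤ, q + i * α = z + Real.logb b (d : ℝ) :=
    ⟨-⌊Real.logb b (d : ℝ) - i * α⌋, by
      have := Int.floor_add_fract (Real.logb b (d : ℝ) - i * α)
      push_cast; rw [hqd]; linarith⟩
  have hb' : (1 : ℝ) < b := by exact_mod_cast (by omega : 1 < b)
  have hdg : dg b (q + i * α) = d := by
    apply dg_eq (by omega) hd (by omega) z hz.ge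
    rw [hz]
    have := Real.logb_lt_logb hb' (x := (d : ℝ)) (y := ((d + 1 : ℕ) : ℝ)) (by exact_mod_cast hd)
      (by push_cast; linarith)
    linarith
  rw [hdg] at h
  obtain ⟨_, _, h3, h4⟩ := dg_spec (by omega : 1 < b) (p + i * α)
  rw [h] at h3 h4
  have hwid := width_lt hb hd
  set F := ⌊p + i * α⌋
  -- p + iα - F - log d in [0,1/2), equals δ + N + z - F
  have e1 : p + i * α - F - Real.logb b (d : ℝ) = δ + ((N + z - F : ℤ) : ℝ) := by
    push_cast; linarith
  have g1 : (0 : ℝ) < ((N + z - F : ℤ) : ℝ) := by linarith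
  have g2 : ((N + z - F : ℤ) : ℝ) < ((1 : ℤ) : ℝ) := by push_cast at *; linarith
  have g1' : 0 < N + z - F := by exact_mod_cast g1
  have g2' : N + z - F < 1 := by exact_mod_cast g2
  omega

lemma wd_injOn {b : ℕ} (hb : 5 ≤ b) {α : ℝ} {n : ℕ} (hn : 1 ≤ n) :
    Set.InjOn (wd b α n) (brk b α n : Set ℝ) := by
  intro p hp q hq hw
  have hp' : p ∈ brk b α n := hp
  have hq' : q ∈ brk b α n := hq
  have h := congrFun hw ⟨0, hn⟩
  simp only [wd, Nat.cast_zero, zero_mul, add_zero] at h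
  have hc := abs_lt.1 (close_of_dg_eq hb h)
  have e1 : p - q = ((p - ⌊p⌋) - (q - ⌊q⌋)) + ((⌊p⌋ - ⌊q⌋ : ℤ) : ℝ) := by push_cast; ring
  have e2 : q - p = ((q - ⌊q⌋) - (p - ⌊p⌋)) + ((⌊q⌋ - ⌊p⌋ : ℤ) : ℝ) := by push_cast; ring
  have a1 := wd_inj_aux hb hq' hw e1 hc.1
  have a2 := wd_inj_aux hb hp' hw.symm e2 (by linarith)
  obtain ⟨_, _, _, _, _, rfl⟩ := mem_brk.1 hp'
  obtain ⟨_, _, _, _, _, rfl⟩ := mem_brk.1 hq'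
  simp only [Int.floor_fract, Int.cast_zero, sub_zero] at a1 a2
  linarith

lemma exists_brk {b : ℕ} (hb : 1 < b) (α : ℝ) {n : ℕ} (hn : 1 ≤ n) (x : ℝ) :
    ∃ p ∈ brk b α n, wd b α n p = wd b α n x := by
  have hb' : (1 : ℝ) < b := by exact_mod_cast hb
  -- reduce to the unit interval
  have hper : wd b α n (Int.fract x) = wd b α n x := by
    funext i
    simp only [wd, dg]
    congr 2
    rw [Int.fract_eq_fract]
    exact ⟨-⌊x⌋, by rw [Int.fract]; push_cast; ring⟩
  rw [← hper]
  set y := Int.fract x with hy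
  have hy0 : 0 ≤ y := Int.fract_nonneg x
  have hy1 : y < 1 := Int.fract_lt_one x
  let f : ℕ → ℝ := fun i => (⌊y + i * α⌋ : ℝ) + Real.logb b (dg b (y + i * α) : ℝ) - i * α
  obtain ⟨j, hj, hmax⟩ := Finset.exists_max_image (Finset.range n) f ⟨0, by simpa using Nat.lt_of_lt_of_le Nat.zero_lt_one hn⟩
  have hj' := Finset.mem_range.1 hj
  have hle : ∀ i, f i ≤ y := fun i => by
    have := (dg_spec hb (y + i * α)).2.2.1
    simp only [f]; linarith
  have h0 : 0 ≤ f 0 := by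
    have : ⌊y⌋ = 0 := Int.floor_eq_zero_iff.2 ⟨hy0, hy1⟩
    have h2 := Real.logb_nonneg hb' (x := (dg b y : ℝ)) (by exact_mod_cast (dg_spec hb y).1)
    simp [f, this, h2]
  have hj0 : 0 ≤ f j := h0.trans (hmax 0 (by simpa using Nat.lt_of_lt_of_le Nat.zero_lt_one hn))
  refine ⟨f j, ?_, ?_⟩
  · refine mem_brk.2 ⟨j, hj', dg b (y + j * α), (dg_spec hb _).1, (dg_spec hb (y + j * α)).2.1, ?_⟩
    symm
    rw [Int.fract_eq_iff]
    exact ⟨hj0, (hle j).trans_lt hy1, -⌊y + j * α⌋, by simp only [f]; push_cast; ring⟩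
  · funext i
    simp only [wd]
    obtain ⟨s1, s2, s3, s4⟩ := dg_spec hb (y + (i : ℕ) * α)
    apply dg_eq hb s1 s2 ⌊y + (i : ℕ) * α⌋
    · have := hmax i (by simp)
      have h3 : f i = (⌊y + (i : ℕ) * α⌋ : ℝ) + Real.logb b (dg b (y + (i : ℕ) * α) : ℝ)
        - (i : ℕ) * α := rfl
      linarith
    · have := hle j
      linarith

lemma wd_right {b : ℕ} (hb : 1 < b) (α : ℝ) (n : ℕ) (p : ℝ) :
    ∃ ε > 0, ∀ x, p ≤ x → x < p + ε → wd b α n x = wd b α n p := by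
  have : ∀ᶠ ε in nhdsWithin (0 : ℝ) (Set.Ioi 0), ∀ i : Fin n,
      p + (i : ℕ) * α + ε < ⌊p + (i : ℕ) * α⌋ +
        Real.logb b ((dg b (p + (i : ℕ) * α) + 1 : ℕ) : ℝ) := by
    rw [Filter.eventually_all]
    intro i
    have h4 := (dg_spec hb (p + (i : ℕ) * α)).2.2.2
    have := Ioo_mem_nhdsGT (sub_pos.2 h4)
    filter_upwards [this] with ε hε
    linarith [hε.2]
  obtain ⟨ε, hε, hpos⟩ := (this.and self_mem_nhdsWithin).exists
  refine ⟨ε, hpos, fun x h1 h2 => ?_⟩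
  funext i
  obtain ⟨s1, s2, s3, s4⟩ := dg_spec hb (p + (i : ℕ) * α)
  have := hε i
  exact dg_eq hb s1 s2 ⌊p + (i : ℕ) * α⌋ (by linarith) (by linarith)

lemma exists_orbit {α : ℝ} (hα : Irrational α) (p ε : ℝ) (hε : 0 < ε) :
    ∃ m : ℕ, 1 ≤ m ∧ ∃ z : ℤ, p ≤ m * α + z ∧ m * α + z < p + ε := by
  have hd : DenseRange (fun k : ℤ => k • ((α : ℝ) : AddCircle (1 : ℝ))) :=
    AddCircle.denseRange_zsmul_coe_iff.2 (by simpa using hα)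
  rw [denseRange_zsmul_iff_nsmul] at hd
  have hopen : IsOpen ((fun x : ℝ => (x : AddCircle (1 : ℝ))) '' Set.Ioo (p - α) (p - α + ε)) :=
    QuotientAddGroup.isOpenMap_coe _ isOpen_Ioo
  obtain ⟨m, x, hx, hxm⟩ := hd.exists_mem_open hopen
    ((Set.nonempty_Ioo.2 (by linarith)).image _)
  have hxm' : (x : AddCircle (1 : ℝ)) = ((m * α : ℝ) : AddCircle (1 : ℝ)) := by
    rw [← nsmul_eq_mul]
    exact hxm
  obtain ⟨z, hz⟩ := (QuotientAddGroup.eq_iff_sub_mem.1 hxm')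
  have hz' : (z : ℝ) = x - m * α := by simpa using hz
  refine ⟨m + 1, by omega, z, ?_, ?_⟩
  · push_cast; linarith [hx.1]
  · push_cast; linarith [hx.2]

lemma complexity_eq_s15 {b : ℕ} (hb : 5 ≤ b) {a : ℝ} (ha : 0 < a)
    (hα : Irrational (Real.logb b a)) {n : ℕ} (hn : 1 ≤ n) :
    blockComplexity a b n = (brk b (Real.logb b a) n).card := by
  have hb1 : 1 < b := by omega
  set α := Real.logb b a with hαd
  have hset : {w : Fin n → ℕ |
      ∃ m : ℕ, 1 ≤ m ∧ ∀ i : Fin n, w i = leadingDigit b (a ^ (m + (i : ℕ)))} =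
      wd b α n '' (brk b α n : Set ℝ) := by
    ext w
    have key : ∀ m : ℕ, (∀ i : Fin n, w i = leadingDigit b (a ^ (m + (i : ℕ)))) ↔
        w = wd b α n (m * α) := by
      intro m
      rw [funext_iff]
      refine forall_congr' fun i => ?_
      rw [leadingDigit_pow hb1 ha, wd, ← hαd]
      push_cast
      rw [add_mul]
    simp only [Set.mem_ofPred_eq, Set.mem_image, key]
    constructor
    · rintro ⟨m, hm, rfl⟩
      obtain ⟨p, hp, h⟩ := exists_brk hb1 α hn (m * α)
      exact ⟨p, hp, h⟩
    · rintro ⟨p, hp, rfl⟩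
      obtain ⟨ε, hε, h⟩ := wd_right hb1 α n p
      obtain ⟨m, hm, z, hz1, hz2⟩ := exists_orbit hα p ε hε
      refine ⟨m, hm, ?_⟩
      rw [← h _ hz1 hz2]
      funext i
      simp only [wd, dg]
      congr 2
      rw [Int.fract_eq_fract]
      exact ⟨z, by ring⟩
  unfold blockComplexity
  rw [hset, (wd_injOn hb hn).ncard_image, Set.ncard_coe_finset]

lemma brk_card_le (b : ℕ) (α : ℝ) (n : ℕ) : (brk b α n).card ≤ (b - 1) * n := by
  unfold brk
  refine Finset.card_image_le.trans ?_
  simp [mul_comm]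

/-- Bad digits satisfy one of two divisibility conditions. -/
lemma bad_cases {b r s d e i : ℕ} {m : ℤ} (hb : 5 ≤ b) (hsf : Squarefree b) (hr : 0 < r)
    (hs : 0 < s) (hco : Nat.Coprime r s) (h2 : r < b * s)
    (hd : 1 ≤ d) (he1 : 1 ≤ e) (he : e < b) (hi : 1 ≤ i)
    (h : (d : ℝ) / e = ((r : ℝ) / s) ^ i * (b : ℝ) ^ m) :
    r ∣ d ∨ (r / Nat.gcd b r ∣ d ∧ d * s < r) := by
  have hb0 : 0 < b := by omega
  have hbR : (b : ℝ) ≠ 0 := by positivity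
  have hsR : (s : ℝ) ≠ 0 := by positivity
  have heR : (e : ℝ) ≠ 0 := by positivity
  obtain ⟨M, rfl | rfl⟩ := m.eq_nat_or_neg
  · left
    have h' : d * s ^ i = e * r ^ i * b ^ M := by
      rw [zpow_natCast, div_pow, div_eq_iff heR] at h
      have : (d : ℝ) * s ^ i = e * r ^ i * b ^ M := by
        rw [h]; field_simp
      exact_mod_cast this
    have : r ^ i ∣ d * s ^ i := by rw [h']; exact ⟨e * b ^ M, by ring⟩
    have := (Nat.Coprime.pow i i hco).dvd_of_dvd_mul_right this
    exact (dvd_pow_self r (by omega)).trans this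
  · have h' : d * b ^ M * s ^ i = e * r ^ i := by
      rw [zpow_neg, zpow_natCast, div_pow, div_eq_iff heR] at h
      have : (d : ℝ) * b ^ M * s ^ i = e * r ^ i := by
        rw [h]; field_simp
      exact_mod_cast this
    obtain ⟨b', r', hcop, hbe, hre⟩ := Nat.exists_coprime b r
    have hg : 0 < Nat.gcd b r := Nat.gcd_pos_of_pos_left _ hb0
    set g := Nat.gcd b r with hgd
    have hrg : r / g = r' := by
      conv_lhs => rw [hre]
      exact Nat.mul_div_cancel _ hg
    have hgb' : Nat.Coprime b' g := by
      rw [hbe] at hsf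
      exact Nat.coprime_of_squarefree_mul hsf
    have hgs : Nat.Coprime g s := Nat.Coprime.coprime_dvd_left (Nat.gcd_dvd_right b r) hco
    have hr's : Nat.Coprime r' s :=
      Nat.Coprime.coprime_dvd_left ⟨g, hre⟩ hco
    rcases lt_trichotomy M i with hM | hM | hM
    · left
      obtain ⟨t, rfl⟩ : ∃ t, i = M + (t + 1) := ⟨i - M - 1, by omega⟩
      have h3 : d * (b' ^ M * s ^ (M + (t + 1))) = e * (g ^ (t + 1) * r' ^ (M + (t + 1))) := by
        have hgM : 0 < g ^ M := by positivity
        apply Nat.eq_of_mul_eq_mul_left hgM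
        rw [hbe, hre] at h'
        calc _ = d * (b' * g) ^ M * s ^ (M + (t + 1)) := by ring
          _ = _ := h'
          _ = _ := by ring
      have h4 : g * r' ∣ g ^ (t + 1) * r' ^ (M + (t + 1)) :=
        mul_dvd_mul (dvd_pow_self g (by omega)) (dvd_pow_self r' (by omega))
      have h5 : g * r' ∣ d * (b' ^ M * s ^ (M + (t + 1))) := by
        rw [h3]; exact h4.mul_left e
      have h6 : Nat.Coprime (g * r') (b' ^ M * s ^ (M + (t + 1))) := by
        apply Nat.Coprime.mul_right
        · exact Nat.Coprime.pow_right _ (Nat.Coprime.mul_left hgb'.symm hcop.symm)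
        · exact Nat.Coprime.pow_right _ (Nat.Coprime.mul_left hgs hr's)
      have := h6.dvd_of_dvd_mul_right h5
      rwa [mul_comm, ← hre] at this
    · right
      subst hM
      constructor
      · rw [hrg]
        have h3 : d * (b' ^ M * s ^ M) = e * r' ^ M := by
          have hgM : 0 < g ^ M := by positivity
          apply Nat.eq_of_mul_eq_mul_left hgM
          rw [hbe, hre] at h'
          calc _ = d * (b' * g) ^ M * s ^ M := by ring
            _ = _ := h'
            _ = _ := by ring
        have h5 : r' ∣ d * (b' ^ M * s ^ M) := by
          rw [h3]; exact (dvd_pow_self r' (by omega)).mul_left e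
        exact (Nat.Coprime.mul_right (Nat.Coprime.pow_right _ hcop.symm)
          (Nat.Coprime.pow_right _ hr's)).dvd_of_dvd_mul_right h5
      · by_contra! hc
        obtain ⟨t, rfl⟩ : ∃ t, M = t + 1 := ⟨M - 1, by omega⟩
        have h7 : r ^ t ≤ (b * s) ^ t := Nat.pow_le_pow_left h2.le t
        have h8 : r * b * r ^ t ≤ (d * s) * b * (b * s) ^ t :=
          Nat.mul_le_mul (Nat.mul_le_mul_right b hc) h7
        have h9 : (d * s) * b * (b * s) ^ t = e * r ^ (t + 1) := by
          rw [← h']; ring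
        have h10 : e * r ^ (t + 1) < b * r ^ (t + 1) :=
          Nat.mul_lt_mul_of_pos_right he (by positivity)
        have h11 : r * b * r ^ t = b * r ^ (t + 1) := by ring
        omega
    · exfalso
      obtain ⟨t, rfl⟩ : ∃ t, M = i + 1 + t := ⟨M - i - 1, by omega⟩
      have h7 : r ^ i ≤ (b * s) ^ i := Nat.pow_le_pow_left h2.le i
      have h10 : e * r ^ i < b * r ^ i := Nat.mul_lt_mul_of_pos_right he (by positivity)
      have h11 : b * r ^ i ≤ b * (b * s) ^ i := Nat.mul_le_mul_left _ h7
      have h12 : d * b ^ (i + 1 + t) * s ^ i = (b * (b * s) ^ i) * (d * b ^ t) := by ring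
      have h13 : 1 ≤ d * b ^ t := Nat.mul_pos hd (by positivity)
      have h14 := Nat.mul_le_mul_left (b * (b * s) ^ i) h13
      omega

lemma slope_bound {b r s : ℕ} (hb : 5 ≤ b) (hr : 0 < r) (hs : 0 < s)
    (h1 : s < r) (h2 : r < b * s) :
    (b - 1) / r + (Nat.gcd b r - 1) / s ≤ b / 2 := by
  have hg : 0 < Nat.gcd b r := Nat.gcd_pos_of_pos_left _ (by omega)
  obtain ⟨c, hc⟩ := Nat.gcd_dvd_left b r
  have hgr : Nat.gcd b r ≤ r := Nat.le_of_dvd hr (Nat.gcd_dvd_right b r)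
  generalize Nat.gcd b r = g at *
  have hB : (g - 1) / s ≤ g - 1 := Nat.div_le_self _ _
  rcases Nat.lt_or_ge g 2 with hg2 | hg2
  · have : g = 1 := by omega
    have h3 : (b - 1) / r ≤ (b - 1) / 2 := Nat.div_le_div_left (by omega) (by omega)
    omega
  · rcases Nat.lt_or_ge c 2 with hc2 | hc2
    · have hc1 : c = 1 := by
        rcases Nat.eq_zero_or_pos c with h | h
        · subst h; omega
        · omega
      subst hc1
      have h3 : (b - 1) / r = 0 := Nat.div_eq_of_lt (by omega)
      have hs2 : 2 ≤ s := by
        by_contra! hlt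
        have : s = 1 := by omega
        subst this; omega
      have h4 : (g - 1) / s ≤ (g - 1) / 2 := Nat.div_le_div_left hs2 (by omega)
      omega
    · have h3 : (b - 1) / r < c := by
        rw [Nat.div_lt_iff_lt_mul hr]
        have : g * c ≤ r * c := Nat.mul_le_mul_right c hgr
        rw [mul_comm c r]
        omega
      obtain ⟨u, rfl⟩ : ∃ u, g = u + 2 := ⟨g - 2, by omega⟩
      obtain ⟨v, rfl⟩ : ∃ v, c = v + 2 := ⟨c - 2, by omega⟩
      have : (u + 2) * (v + 2) = u * v + 2 * u + 2 * v + 4 := by ring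
      have : 0 ≤ u * v := Nat.zero_le _
      omega

/-- The digits that are allowed to be bad. -/
def badSet (b r s : ℕ) : Finset ℕ :=
  (Finset.Ioc 0 (b - 1)).filter (fun d => r ∣ d ∨ (r / Nat.gcd b r ∣ d ∧ d * s < r))

lemma badSet_card {b r s : ℕ} (hb : 5 ≤ b) (hr : 0 < r) (hs : 0 < s)
    (h1 : s < r) (h2 : r < b * s) : (badSet b r s).card ≤ b / 2 := by
  refine le_trans ?_ (slope_bound hb hr hs h1 h2)
  unfold badSet
  rw [Finset.filter_or]
  refine (Finset.card_union_le _ _).trans ?_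
  rw [Nat.Ioc_filter_dvd_card_eq_div]
  have hg : 0 < Nat.gcd b r := Nat.gcd_pos_of_pos_left _ (by omega)
  obtain ⟨r', hr'⟩ := Nat.gcd_dvd_right b r
  generalize Nat.gcd b r = g at *
  have hrg : r / g = r' := by rw [hr']; exact Nat.mul_div_cancel_left _ hg
  have hr'0 : 0 < r' := Nat.pos_of_ne_zero (by rintro rfl; omega)
  apply Nat.add_le_add_left
  have hsub : (Finset.Ioc 0 (b - 1)).filter (fun d => r / g ∣ d ∧ d * s < r) ⊆
      (Finset.Ioc 0 ((g - 1) / s)).image (fun t => r' * t) := by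
    intro d hd
    simp only [Finset.mem_filter, Finset.mem_Ioc, hrg] at hd
    obtain ⟨⟨hd0, hdb⟩, ⟨t, rfl⟩, hlt⟩ := hd
    rw [Finset.mem_image]
    refine ⟨t, ?_, rfl⟩
    rw [Finset.mem_Ioc]
    refine ⟨Nat.pos_of_ne_zero (by rintro rfl; simp at hd0), ?_⟩
    rw [Nat.le_div_iff_mul_le hs]
    have : r' * (t * s) < r' * g := by rw [← mul_assoc, mul_comm r' g, ← hr']; exact hlt
    have := Nat.lt_of_mul_lt_mul_left this
    omega
  refine (Finset.card_le_card hsub).trans (Finset.card_image_le.trans ?_)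
  simp

lemma log_eq_imp {b : ℕ} (hb : 5 ≤ b) {a : ℝ} (ha : 0 < a) {d e : ℕ} (hd : 1 ≤ d) (he : 1 ≤ e)
    {i : ℕ} {z : ℤ} (h : Real.logb b d - Real.logb b e = i * Real.logb b a + z) :
    (d : ℝ) / e = a ^ i * (b : ℝ) ^ z := by
  have hb' : (5 : ℝ) ≤ b := by exact_mod_cast hb
  have hd' : (0 : ℝ) < d := by exact_mod_cast hd
  have he' : (0 : ℝ) < e := by exact_mod_cast he
  rw [← Real.logb_div hd'.ne' he'.ne'] at h
  have := Real.rpow_logb (b := b) (x := (d : ℝ) / e) (by linarith) (by linarith) (by positivity)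
  rw [← this, h, Real.rpow_add (by linarith), Real.rpow_intCast, mul_comm (i : ℝ),
    Real.rpow_mul (by linarith), Real.rpow_logb (by linarith) (by linarith) ha, Real.rpow_natCast]

lemma brk_step {b : ℕ} (hb : 5 ≤ b) (α : ℝ) (n : ℕ) (S : Finset ℕ)
    (hS : S ⊆ Finset.Ioc 0 (b - 1))
    (hnew : ∀ d ∈ S, Int.fract (Real.logb b (d : ℝ) - n * α) ∉ brk b α n) :
    (brk b α n).card + S.card ≤ (brk b α (n + 1)).card := by
  have hb' : (1 : ℝ) < b := by exact_mod_cast (by omega : 1 < b)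
  have hS' : ∀ d ∈ S, 1 ≤ d ∧ d < b := fun d hd => by
    have := Finset.mem_Ioc.1 (hS hd)
    omega
  let f : ℕ → ℝ := fun d => Int.fract (Real.logb b (d : ℝ) - n * α)
  have hinj : Set.InjOn f (S : Set ℕ) := by
    intro d hd e he hde
    obtain ⟨z, hz⟩ := Int.fract_eq_fract.1 hde
    obtain ⟨d1, d2⟩ := hS' d hd
    obtain ⟨e1, e2⟩ := hS' e he
    have hrange : ∀ x : ℕ, 1 ≤ x → x < b → 0 ≤ Real.logb b (x : ℝ) ∧ Real.logb b (x : ℝ) < 1 := by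
      intro x hx hxb
      refine ⟨Real.logb_nonneg hb' (by exact_mod_cast hx), ?_⟩
      rw [Real.logb_lt_iff_lt_rpow hb' (by exact_mod_cast hx), Real.rpow_one]
      exact_mod_cast hxb
    obtain ⟨r1, r2⟩ := hrange d d1 d2
    obtain ⟨r3, r4⟩ := hrange e e1 e2
    have z1 : (z : ℝ) < (1 : ℤ) := by push_cast; linarith
    have z2 : ((-1 : ℤ) : ℝ) < z := by push_cast; linarith
    have z1' : z < 1 := by exact_mod_cast z1
    have z2' : -1 < z := by exact_mod_cast z2
    have z0 : z = 0 := by omega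
    rw [z0] at hz
    have heq : Real.logb b (d : ℝ) = Real.logb b (e : ℝ) := by push_cast at hz; linarith
    have := Real.logb_injOn_pos hb' (show (d : ℝ) ∈ Set.Ioi 0 from by
      simpa using (by omega : 0 < d)) (show (e : ℝ) ∈ Set.Ioi 0 from by
      simpa using (by omega : 0 < e)) heq
    exact_mod_cast this
  have hdisj : Disjoint (brk b α n) (S.image f) := by
    rw [Finset.disjoint_right]
    intro x hx
    obtain ⟨d, hd, rfl⟩ := Finset.mem_image.1 hx
    exact hnew d hd
  rw [← Finset.card_image_of_injOn hinj, ← Finset.card_union_of_disjoint hdisj]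
  apply Finset.card_le_card
  intro x hx
  rcases Finset.mem_union.1 hx with hx | hx
  · obtain ⟨i, hi, d, hd, hdb, rfl⟩ := mem_brk.1 hx
    exact mem_brk.2 ⟨i, by omega, d, hd, hdb, rfl⟩
  · obtain ⟨d, hd, rfl⟩ := Finset.mem_image.1 hx
    obtain ⟨d1, d2⟩ := hS' d hd
    exact mem_brk.2 ⟨n, by omega, d, d1, d2, rfl⟩

lemma brk_card_ge {b r s : ℕ} {k : ℤ} {a : ℝ} (hb : 5 ≤ b) (hsf : Squarefree b) (hr : 0 < r)
    (hs : 0 < s) (hco : Nat.Coprime r s) (h1 : s < r) (h2 : r < b * s) (ha : 0 < a)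
    (hrep : a = ((r : ℝ) / s) * (b : ℝ) ^ k) (n : ℕ) :
    (b - 1) / 2 * (n + 1) + (b - 1 + 1) / 2 ≤ (brk b (Real.logb b a) (n + 1)).card := by
  induction n with
  | zero =>
    have := brk_step hb (Real.logb b a) 0 (Finset.Ioc 0 (b - 1)) (Finset.Subset.refl _)
      (by intro d _ h; simp [brk] at h)
    simp only [Nat.card_Ioc] at this
    omega
  | succ n ih =>
    have hbR : (b : ℝ) ≠ 0 := by
      have : b ≠ 0 := by omega
      exact_mod_cast this
    have hbs : badSet b r s ⊆ Finset.Ioc 0 (b - 1) := Finset.filter_subset _ _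
    have hstep := brk_step hb (Real.logb b a) (n + 1) (Finset.Ioc 0 (b - 1) \ badSet b r s)
      Finset.sdiff_subset (by
        intro d hd hmem
        rw [Finset.mem_sdiff] at hd
        apply hd.2
        have hd1 := Finset.mem_Ioc.1 hd.1
        refine Finset.mem_filter.2 ⟨hd.1, ?_⟩
        obtain ⟨j, hj, e, he, heb, heq⟩ := mem_brk.1 hmem
        obtain ⟨z, hz⟩ := Int.fract_eq_fract.1 heq
        obtain ⟨i, hi⟩ : ∃ i, n + 1 = j + i := ⟨n + 1 - j, by omega⟩
        have hcast : ((n + 1 : ℕ) : ℝ) = j + i := by rw [hi]; push_cast; ring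
        rw [hcast] at hz
        have hlog : Real.logb b d - Real.logb b e = i * Real.logb b a + z := by linarith
        have hq := log_eq_imp hb ha (by omega) he hlog
        refine bad_cases (m := k * i + z) hb hsf hr hs hco h2 (by omega) he heb
          (by omega : 1 ≤ i) ?_
        rw [hq, hrep, mul_pow, zpow_add₀ hbR, zpow_mul, zpow_natCast]
        ring)
    have hbad := badSet_card hb hr hs h1 h2
    rw [Finset.card_sdiff_of_subset hbs, Nat.card_Ioc] at hstep
    have : (b - 1) / 2 * (n + 1 + 1) = (b - 1) / 2 * (n + 1) + (b - 1) / 2 := by ring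
    omega

lemma irr {b r s : ℕ} {k : ℤ} {a : ℝ} (hb : 5 ≤ b) (hsf : Squarefree b) (hr : 0 < r)
    (hs : 0 < s) (hco : Nat.Coprime r s) (h1 : s < r) (h2 : r < b * s) (ha : 0 < a)
    (hrep : a = ((r : ℝ) / s) * (b : ℝ) ^ k) : Irrational (Real.logb b a) := by
  have hb' : (5 : ℝ) ≤ b := by exact_mod_cast hb
  have hbR : (b : ℝ) ≠ 0 := by linarith
  have hsR : (0 : ℝ) < s := by exact_mod_cast hs
  rintro ⟨q, hq⟩
  have hden : 0 < q.den := q.den_pos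
  have hlog : Real.logb b (1 : ℕ) - Real.logb b (1 : ℕ) =
      (q.den : ℕ) * Real.logb b a + ((-q.num : ℤ) : ℝ) := by
    rw [← hq]
    have : (q.den : ℝ) * (q : ℝ) = q.num := by exact_mod_cast Rat.den_mul_eq_num q
    rw [this]; push_cast; ring
  have h3 := log_eq_imp hb ha le_rfl le_rfl hlog
  rw [hrep, mul_pow, ← zpow_natCast ((b : ℝ) ^ k), ← zpow_mul, mul_assoc, ← zpow_add₀ hbR] at h3
  generalize (k * (q.den : ℤ) + -q.num) = m at h3
  generalize q.den = i at *
  have hs0 : (s : ℝ) ≠ 0 := hsR.ne'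
  obtain ⟨M, rfl | rfl⟩ := m.eq_nat_or_neg
  · have h' : s ^ i = r ^ i * b ^ M := by
      have : (s : ℝ) ^ i = r ^ i * b ^ M := by
        rw [zpow_natCast, div_pow] at h3
        have h4 : (1 : ℝ) = r ^ i / s ^ i * b ^ M := by simpa using h3
        field_simp at h4
        linarith
      exact_mod_cast this
    have h5 : s ^ i < r ^ i := Nat.pow_lt_pow_left h1 (by omega)
    have h6 : r ^ i * 1 ≤ r ^ i * b ^ M := Nat.mul_le_mul_left _ (Nat.pos_of_ne_zero (by
      have : b ≠ 0 := by omega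
      positivity))
    omega
  · have h' : b ^ M * s ^ i = r ^ i := by
      have : (b : ℝ) ^ M * s ^ i = r ^ i := by
        rw [zpow_neg, zpow_natCast, div_pow] at h3
        have h4 : (1 : ℝ) = r ^ i / s ^ i * ((b : ℝ) ^ M)⁻¹ := by simpa using h3
        field_simp at h4
        linarith
      exact_mod_cast this
    have hM : M ≠ 0 := by
      rintro rfl
      have h5 : s ^ i < r ^ i := Nat.pow_lt_pow_left h1 (by omega)
      rw [pow_zero] at h'
      omega
    have hs1 : s = 1 := by
      have hd : s ∣ r ^ i := by
        rw [← h']; exact (dvd_pow_self s (by omega)).mul_left _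
      exact Nat.eq_one_of_dvd_one (by
        have := (Nat.Coprime.pow_left i hco)
        rw [← this]
        exact Nat.dvd_gcd hd dvd_rfl)
    have hbd : b ∣ r ^ i := by
      rw [← h']; exact (dvd_pow_self b hM).mul_right _
    have := Nat.le_of_dvd hr ((hsf.dvd_pow_iff_dvd (by omega)).1 hbd)
    subst hs1
    omega

/-- Extreme values: With `b ≥ 5` squarefree, `a` a positive rational
not an integral power of `b`, and `a = (r/s)·b^k` in lowest terms with `1 < r/s < b`,
the slope `c_{a,b} = b - 1 - ⌊(b-1)/r⌋ - ⌊(gcd(b,r)-1)/s⌋` satisfies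
`⌊(b-1)/2⌋ ≤ c_{a,b} ≤ b - 1`, and `⌊(b-1)/2⌋·n + ⌈(b-1)/2⌉ ≤ p_{a,b}(n) ≤ (b-1)·n`. -/
theorem blockComplexity_extreme (b : ℕ) (hb : 5 ≤ b) (hsf : Squarefree b)
    (a : ℚ) (ha : 0 < a) (hnp : ∀ j : ℤ, (a : ℝ) ≠ (b : ℝ) ^ j)
    (r s : ℕ) (k : ℤ) (hr : 0 < r) (hs : 0 < s) (hco : Nat.Coprime r s)
    (hrep : (a : ℝ) = ((r : ℝ) / s) * (b : ℝ) ^ k)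
    (h1 : (s : ℝ) < r) (h2 : (r : ℝ) < (b : ℝ) * s) :
    (((b - 1) / 2 : ℕ) : ℤ) ≤
        (b : ℤ) - 1 - ((b - 1) / r : ℕ) - ((Nat.gcd b r - 1) / s : ℕ) ∧
      (b : ℤ) - 1 - ((b - 1) / r : ℕ) - ((Nat.gcd b r - 1) / s : ℕ) ≤ (b : ℤ) - 1 ∧
      ∀ n : ℕ, 1 ≤ n →
        (b - 1) / 2 * n + ((b - 1) + 1) / 2 ≤ blockComplexity (a : ℝ) b n ∧
          blockComplexity (a : ℝ) b n ≤ (b - 1) * n := by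
  have h1' : s < r := by exact_mod_cast h1
  have h2' : r < b * s := by exact_mod_cast h2
  have ha' : (0 : ℝ) < (a : ℝ) := by exact_mod_cast ha
  have hirr := irr hb hsf hr hs hco h1' h2' ha' hrep
  have hsl := slope_bound hb hr hs h1' h2'
  refine ⟨by omega, by
    generalize (b - 1) / r = A
    generalize (Nat.gcd b r - 1) / s = B
    omega, fun n hn => ?_⟩
  rw [complexity_eq_s15 hb ha' hirr hn]
  refine ⟨?_, brk_card_le _ _ _⟩
  obtain ⟨m, rfl⟩ : ∃ m, n = m + 1 := ⟨n - 1, by omega⟩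
  exact brk_card_ge hb hsf hr hs hco h1' h2' ha' hrep m
end
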